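/- If G is a finite simple graph on n vertices in which every vertex has degree exactly 3 (a cubic graph), then the restrained domination number of G satisfies 5·γ_r(G) ≤ 2·n; equivalently, G has a restrained dominating set of cardinality at most 2n/5. -/

import Mathlib

/-- `S` is a restrained dominating set of `G`: every vertex not in `S` has a
neighbor in `S` (domination) and also a neighbor not in `S` (restraint). -/
def IsRestrainedDomSet {V : Type*} (G : SimpleGraph V) (S : Set V) : Prop :=
  (∀ v ∉ S, ∃ u ∈ S, G.Adj v u) ∧ (∀ v ∉ S, ∃ u ∉ S, G.Adj v u)

/-- The restrained domination number of a finite graph: the minimum cardinality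
of a restrained dominating set. -/
noncomputable def restrainedDominationNumber {V : Type*} [Fintype V] (G : SimpleGraph V) : ℕ :=
  sInf {n : ℕ | ∃ S : Set V, IsRestrainedDomSet G S ∧ S.ncard = n}

namespace RD
open Finset Classical

set_option linter.unusedSectionVars false

variable {V : Type*} [Fintype V]

/-- `B` is the complement of a restrained dominating set. -/
def Valid (G : SimpleGraph V) (B : Finset V) : Prop :=
  ∀ t ∈ B, (∃ s ∈ B, G.Adj t s) ∧ (∃ s, s ∉ B ∧ G.Adj t s)

/-- the neighbours of `v` are exactly `a`, `b`, `c`. -/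
def Tr (G : SimpleGraph V) (v a b c : V) : Prop :=
  a ≠ b ∧ a ≠ c ∧ b ≠ c ∧ ∀ t, G.Adj v t ↔ (t = a ∨ t = b ∨ t = c)

/-- number of black neighbours -/
noncomputable def d (G : SimpleGraph V) (B : Finset V) (v : V) : ℕ :=
  (univ.filter fun t => G.Adj v t ∧ t ∈ B).card

/-- number of white neighbours -/
noncomputable def wn (G : SimpleGraph V) (B : Finset V) (v : V) : ℕ :=
  (univ.filter fun t => G.Adj v t ∧ t ∉ B).card

/-- twice the number of white-white edges -/
noncomputable def E (G : SimpleGraph V) (B : Finset V) : ℕ :=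
  ∑ v ∈ univ.filter (fun v => v ∉ B), wn G B v

noncomputable def W3 (G : SimpleGraph V) (B : Finset V) : Finset V :=
  univ.filter fun v => v ∉ B ∧ ∀ t, G.Adj v t → t ∉ B

/-- deep W2 vertices -/
noncomputable def deep (G : SimpleGraph V) (B : Finset V) : Finset V :=
  univ.filter fun v => v ∉ B ∧ d G B v = 1 ∧
    ¬ ∃ x y, x ∈ B ∧ y ∈ B ∧ G.Adj v x ∧ G.Adj x y ∧ d G B y = 1

structure Opt (G : SimpleGraph V) (B : Finset V) : Prop where
  valid : Valid G B
  h1 : ∀ B', Valid G B' → B'.card ≤ B.card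
  h2 : ∀ B', Valid G B' → B'.card = B.card →
    E G B + 4 * (W3 G B).card ≤ E G B' + 4 * (W3 G B').card
  h3 : ∀ B', Valid G B' → B'.card = B.card →
    E G B + 4 * (W3 G B).card = E G B' + 4 * (W3 G B').card →
    (deep G B).card ≤ (deep G B').card

theorem exists_opt (G : SimpleGraph V) : ∃ B, Opt G B := by
  let f : Finset V → ℕ ×ₗ (ℕ ×ₗ ℕ) := fun B =>
    toLex (Fintype.card V - B.card, toLex (E G B + 4 * (W3 G B).card, (deep G B).card))
  obtain ⟨B, hB, hmin⟩ := Finset.exists_min_image (univ.filter fun B => Valid G B) f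
    ⟨∅, by rw [mem_filter]; exact ⟨mem_univ _, fun t ht => absurd ht (by simp)⟩⟩
  simp only [mem_filter, mem_univ, true_and] at hB hmin
  have key : ∀ B', Valid G B' → (Fintype.card V - B.card < Fintype.card V - B'.card) ∨
      (Fintype.card V - B.card = Fintype.card V - B'.card ∧
       ((E G B + 4 * (W3 G B).card < E G B' + 4 * (W3 G B').card) ∨
        (E G B + 4 * (W3 G B).card = E G B' + 4 * (W3 G B').card ∧
          (deep G B).card ≤ (deep G B').card))) := by
    intro B' h'
    have := hmin B' h'
    simpa [f, Prod.Lex.toLex_le_toLex] using this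
  have hc : ∀ B' : Finset V, B'.card ≤ Fintype.card V := fun B' => Finset.card_le_univ B'
  refine ⟨B, hB, ?_, ?_, ?_⟩
  · intro B' h'
    have := key B' h'; have := hc B; have := hc B'; omega
  · intro B' h' _
    have := key B' h'; have := hc B; have := hc B'; omega
  · intro B' h' _ _
    have := key B' h'; have := hc B; have := hc B'; omega

theorem Tr.rot {G : SimpleGraph V} {v a b c : V} (h : Tr G v a b c) : Tr G v b c a := by
  obtain ⟨h1, h2, h3, h4⟩ := h
  exact ⟨h3, h1.symm, h2.symm, fun t => by rw [h4]; tauto⟩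

theorem Tr.swap {G : SimpleGraph V} {v a b c : V} (h : Tr G v a b c) : Tr G v a c b := by
  obtain ⟨h1, h2, h3, h4⟩ := h
  exact ⟨h2, h1, h3.symm, fun t => by rw [h4]; tauto⟩

theorem exists_tr {G : SimpleGraph V} (hG : ∀ v : V, (G.neighborSet v).ncard = 3) (v : V) :
    ∃ a b c, Tr G v a b c := by
  obtain ⟨a, b, c, h1, h2, h3, h4⟩ := Set.ncard_eq_three.1 (hG v)
  refine ⟨a, b, c, h1, h2, h3, fun t => ?_⟩
  rw [← SimpleGraph.mem_neighborSet, h4]; simp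

theorem Tr.d_eq {G : SimpleGraph V} {B : Finset V} {v a b c : V} (h : Tr G v a b c) :
    d G B v = (if a ∈ B then 1 else 0) + (if b ∈ B then 1 else 0) + (if c ∈ B then 1 else 0) := by
  obtain ⟨h1, h2, h3, h4⟩ := h
  have : (univ.filter fun t => G.Adj v t ∧ t ∈ B) = ({a, b, c} : Finset V).filter (· ∈ B) := by
    ext t; simp [h4]
  rw [d, this, Finset.card_filter, sum_insert (by simp [h1, h2]), sum_insert (by simp [h3]),
    sum_singleton]
  omega

theorem Tr.wn_eq {G : SimpleGraph V} {B : Finset V} {v a b c : V} (h : Tr G v a b c) :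
    wn G B v = (if a ∈ B then 0 else 1) + (if b ∈ B then 0 else 1) + (if c ∈ B then 0 else 1) := by
  obtain ⟨h1, h2, h3, h4⟩ := h
  have : (univ.filter fun t => G.Adj v t ∧ t ∉ B) = ({a, b, c} : Finset V).filter (· ∉ B) := by
    ext t; simp [h4]
  rw [wn, this, Finset.card_filter, sum_insert (by simp [h1, h2]), sum_insert (by simp [h3]),
    sum_singleton]
  simp only [ite_not]
  omega

/-- adding a vertex to `B` -/
theorem E_insert (G : SimpleGraph V) (B : Finset V) (t : V) (ht : t ∉ B) :
    E G (insert t B) + 2 * wn G B t = E G B := by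
  have e1 : ∀ B : Finset V, E G B = ∑ v, ∑ s, (if v ∉ B then 1 else 0) * (if s ∉ B then 1 else 0) *
      (if G.Adj v s then 1 else 0) := by
    intro B
    rw [E, sum_filter]
    refine sum_congr rfl fun v _ => ?_
    by_cases hv : v ∈ B
    · simp [hv]
    · simp only [hv, not_false_eq_true, if_true, wn, card_filter, one_mul]
      refine sum_congr rfl fun s _ => ?_
      by_cases h1 : G.Adj v s <;> by_cases h2 : s ∈ B <;> simp [h1, h2]
  have e2 : ∀ v, (if v ∉ B then 1 else 0) = (if v ∉ insert t B then 1 else 0) + (if v = t then 1 else 0) := by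
    intro v
    by_cases h : v = t
    · subst h; simp [ht]
    · simp [h]
  have e3 : wn G B t = ∑ s, (if s ∉ insert t B then 1 else 0) * (if G.Adj t s then 1 else 0) := by
    rw [wn, card_filter]
    refine sum_congr rfl fun s _ => ?_
    by_cases h : s = t
    · subst h; simp
    · by_cases h1 : G.Adj t s <;> by_cases h2 : s ∈ B <;> simp [h1, h2, h]
  have e4 : wn G B t = ∑ s, (if s ∉ insert t B then 1 else 0) * (if G.Adj s t then 1 else 0) := by
    rw [e3]; simp only [G.adj_comm]
  rw [e1 B, e1 (insert t B)]
  simp only [e2, add_mul, mul_add, sum_add_distrib]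
  have a1 : (∑ x, ∑ y, (if x ∉ insert t B then 1 else 0) * (if y = t then 1 else 0) *
      (if G.Adj x y then 1 else 0)) = wn G B t := by
    rw [e4]
    refine sum_congr rfl fun s _ => ?_
    rw [Finset.sum_eq_single t] <;> simp +contextual
  have a2 : (∑ x, ∑ y, (if x = t then 1 else 0) * (if y ∉ insert t B then 1 else 0) *
      (if G.Adj x y then 1 else 0)) = wn G B t := by
    rw [e3, Finset.sum_eq_single t] <;> simp +contextual
  have a3 : (∑ x, ∑ y, (if x = t then 1 else 0) * (if y = t then 1 else 0) *
      (if G.Adj x y then 1 else 0)) = 0 := by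
    rw [Finset.sum_eq_single t]
    · rw [Finset.sum_eq_single t] <;> simp +contextual
    · simp +contextual
    · simp
  rw [a1, a2, a3]; ring

theorem E_erase (G : SimpleGraph V) (B : Finset V) (t : V) (ht : t ∈ B) :
    E G (B.erase t) = E G B + 2 * wn G (B.erase t) t := by
  have := E_insert G (B.erase t) t (by simp)
  rw [insert_erase ht] at this
  omega


theorem valid_move {G : SimpleGraph V} {B B' : Finset V} (hv : Valid G B)
    (hA : ∀ t ∈ B', t ∉ B → (∃ s ∈ B', G.Adj t s) ∧ ∃ s, s ∉ B' ∧ G.Adj t s)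
    (hR : ∀ r ∈ B, r ∉ B' → ∀ t, G.Adj r t → t ∈ B → t ∈ B' → ∃ s ∈ B', G.Adj t s)
    (hA' : ∀ a ∈ B', a ∉ B → ∀ t, G.Adj a t → t ∈ B → t ∈ B' → ∃ s, s ∉ B' ∧ G.Adj t s) :
    Valid G B' := by
  intro t ht
  by_cases hb : t ∈ B
  · obtain ⟨⟨s, hs, hs'⟩, r, hr, hr'⟩ := hv t hb
    constructor
    · by_cases h : s ∈ B'
      · exact ⟨s, h, hs'⟩
      · exact hR s hs h t hs'.symm hb ht
    · by_cases h : r ∈ B'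
      · exact hA' r h hr t hr'.symm hb ht
      · exact ⟨r, h, hr'⟩
  · exact hA t ht hb

/-- black vertex with one black neighbour `p` -/
structure K1 (G : SimpleGraph V) (B : Finset V) (y p o o' : V) : Prop where
  mem : y ∈ B
  tr : Tr G y p o o'
  h1 : p ∈ B
  h2 : o ∉ B
  h3 : o' ∉ B

/-- black vertex with two black neighbours `y`, `z` -/
structure K2 (G : SimpleGraph V) (B : Finset V) (x y z v : V) : Prop where
  mem : x ∈ B
  tr : Tr G x y z v
  h1 : y ∈ B
  h2 : z ∈ B
  h3 : v ∉ B

/-- white vertex with three black neighbours -/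
structure U0 (G : SimpleGraph V) (B : Finset V) (v a b c : V) : Prop where
  mem : v ∉ B
  tr : Tr G v a b c
  h1 : a ∈ B
  h2 : b ∈ B
  h3 : c ∈ B

/-- white vertex with two black neighbours -/
structure U1 (G : SimpleGraph V) (B : Finset V) (v p q a : V) : Prop where
  mem : v ∉ B
  tr : Tr G v p q a
  h1 : p ∈ B
  h2 : q ∈ B
  h3 : a ∉ B

/-- white vertex with one black neighbour -/
structure U2 (G : SimpleGraph V) (B : Finset V) (v x u w : V) : Prop where
  mem : v ∉ B
  tr : Tr G v x u w
  h1 : x ∈ B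
  h2 : u ∉ B
  h3 : w ∉ B

/-- white vertex with no black neighbour -/
structure U3 (G : SimpleGraph V) (B : Finset V) (v a b c : V) : Prop where
  mem : v ∉ B
  tr : Tr G v a b c
  h1 : a ∉ B
  h2 : b ∉ B
  h3 : c ∉ B

end RD

namespace RD
open Finset Classical
set_option linter.unusedSectionVars false
variable {V : Type*} [Fintype V]

def Cub (G : SimpleGraph V) : Prop := ∀ v, ∃ a b c, Tr G v a b c

section basic
variable {G : SimpleGraph V} {B : Finset V}

theorem Tr.cases {v a b c t : V} (h : Tr G v a b c) (ht : G.Adj v t) : t = a ∨ t = b ∨ t = c :=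
  (h.2.2.2 t).1 ht
theorem Tr.a1 {v a b c : V} (h : Tr G v a b c) : G.Adj v a := (h.2.2.2 a).2 (by simp)
theorem Tr.a2 {v a b c : V} (h : Tr G v a b c) : G.Adj v b := (h.2.2.2 b).2 (by simp)
theorem Tr.a3 {v a b c : V} (h : Tr G v a b c) : G.Adj v c := (h.2.2.2 c).2 (by simp)

theorem Cub.tr1 (hG : Cub G) {v a : V} (h : G.Adj v a) : ∃ b c, Tr G v a b c := by
  obtain ⟨x, y, z, t⟩ := hG v
  rcases t.cases h with rfl | rfl | rfl
  · exact ⟨_, _, t⟩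
  · exact ⟨_, _, t.rot⟩
  · exact ⟨_, _, t.rot.rot⟩

theorem Cub.tr2 (hG : Cub G) {v a b : V} (h : G.Adj v a) (h' : G.Adj v b) (hab : a ≠ b) :
    ∃ c, Tr G v a b c := by
  obtain ⟨y, z, t⟩ := hG.tr1 h
  rcases t.cases h' with rfl | rfl | rfl
  · exact absurd rfl hab
  · exact ⟨_, t⟩
  · exact ⟨_, t.swap⟩

theorem Cub.other_white (hG : Cub G) {y : V} (hd : d G B y ≤ 1) (o : V) :
    ∃ o', o' ≠ o ∧ o' ∉ B ∧ G.Adj y o' := by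
  obtain ⟨a, b, c, t⟩ := hG y
  have := t.d_eq (B := B)
  have h1 := t.a1; have h2 := t.a2; have h3 := t.a3
  obtain ⟨n1, n2, n3, -⟩ := t
  by_contra hc
  push Not at hc
  have c1 := hc a; have c2 := hc b; have c3 := hc c
  grind

theorem Cub.other_black (hG : Cub G) {y : V} (hd : 2 ≤ d G B y) (o : V) :
    ∃ o', o' ≠ o ∧ o' ∈ B ∧ G.Adj y o' := by
  obtain ⟨a, b, c, t⟩ := hG y
  have := t.d_eq (B := B)
  have h1 := t.a1; have h2 := t.a2; have h3 := t.a3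
  obtain ⟨n1, n2, n3, -⟩ := t
  by_contra hc
  push Not at hc
  have c1 := hc a; have c2 := hc b; have c3 := hc c
  grind

theorem ub {y s s' : V} (hd : d G B y ≤ 1) (h : G.Adj y s) (h' : G.Adj y s')
    (hs : s ∈ B) (hs' : s' ∈ B) : s = s' := by
  unfold d at hd
  rw [card_le_one] at hd
  exact hd s (by simp [h, hs]) s' (by simp [h', hs'])

theorem Cub.d_wn (hG : Cub G) (y : V) : d G B y + wn G B y = 3 := by
  obtain ⟨a, b, c, t⟩ := hG y
  rw [t.d_eq, t.wn_eq]
  split_ifs <;> rfl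

theorem Cub.uw (hG : Cub G) {y s s' : V} (hd : 2 ≤ d G B y) (h : G.Adj y s) (h' : G.Adj y s')
    (hs : s ∉ B) (hs' : s' ∉ B) : s = s' := by
  have := hG.d_wn (B := B) y
  have hd : wn G B y ≤ 1 := by omega
  unfold wn at hd
  rw [card_le_one] at hd
  exact hd s (by simp [h, hs]) s' (by simp [h', hs'])

theorem d_pos {y s : V} (h : G.Adj y s) (hs : s ∈ B) : 1 ≤ d G B y :=
  card_pos.2 ⟨s, by simp [h, hs]⟩
theorem wn_pos {y s : V} (h : G.Adj y s) (hs : s ∉ B) : 1 ≤ wn G B y :=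
  card_pos.2 ⟨s, by simp [h, hs]⟩

theorem Valid.d12 (hv : Valid G B) (hG : Cub G) {y : V} (hy : y ∈ B) :
    d G B y = 1 ∨ d G B y = 2 := by
  obtain ⟨⟨s, hs, hs'⟩, r, hr, hr'⟩ := hv y hy
  have := d_pos hs' hs
  have := wn_pos hr' hr
  have := hG.d_wn (B := B) y
  omega

theorem wn_le1 {v a b c : V} (h : Tr G v a b c) (ha : a ∈ B) (hb : b ∈ B) : wn G B v ≤ 1 := by
  rw [h.wn_eq, if_pos ha, if_pos hb]; split_ifs <;> simp
theorem wn_le2 {v a b c : V} (h : Tr G v a b c) (ha : a ∈ B) : wn G B v ≤ 2 := by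
  rw [h.wn_eq, if_pos ha]; split_ifs <;> simp
theorem wn_ge1 {v a : V} (h : G.Adj v a) (ha : a ∉ B) : 1 ≤ wn G B v := wn_pos h ha
theorem wn_ge2 {v a b c : V} (h : Tr G v a b c) (ha : a ∉ B) (hb : b ∉ B) : 2 ≤ wn G B v := by
  rw [h.wn_eq, if_neg ha, if_neg hb]; split_ifs <;> simp
theorem wn_ge3 {v a b c : V} (h : Tr G v a b c) (ha : a ∉ B) (hb : b ∉ B) (hc : c ∉ B) :
    3 ≤ wn G B v := by
  rw [h.wn_eq, if_neg ha, if_neg hb, if_neg hc]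

theorem E_erase_le (t : V) {k : ℕ} (h : wn G (B.erase t) t ≤ k) :
    E G (B.erase t) ≤ E G B + 2 * k := by
  by_cases ht : t ∈ B
  · rw [E_erase G B t ht]; omega
  · rw [erase_eq_of_notMem ht]; omega
theorem E_insert_le {t : V} (ht : t ∉ B) {k : ℕ} (h : k ≤ wn G B t) :
    E G (insert t B) + 2 * k ≤ E G B := by
  have := E_insert G B t ht; omega

def Mx (G : SimpleGraph V) (B : Finset V) : Prop :=
  Valid G B ∧ ∀ B', Valid G B' → B'.card ≤ B.card

theorem Opt.mx (h : Opt G B) : Mx G B := ⟨h.valid, h.h1⟩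

/-- contradiction with the second criterion -/
theorem Opt.drop (h : Opt G B) {B' : Finset V} (hv : Valid G B') (hc : B.card ≤ B'.card)
    (hE : E G B' < E G B) (hW : W3 G B' ⊆ W3 G B) : False := by
  have := h.h2 B' hv (le_antisymm (h.h1 B' hv) hc)
  have := card_le_card hW
  omega

theorem F1 (hG : Cub G) (hB : Mx G B) {w u p : V} (hw : w ∉ B) (hu : G.Adj w u) (hu' : u ∉ B)
    (hp : G.Adj w p) (hp' : p ∈ B) : ∃ x ∈ B, G.Adj w x ∧ d G B x = 2 := by
  by_contra hc
  push Not at hc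
  have hval : Valid G (insert w B) := by
    apply valid_move hB.1
    · intro t ht ht'
      have : t = w := by simpa [ht'] using ht
      subst this
      exact ⟨⟨p, by simp [hp'], hp⟩, u, by simp [hu', hu.ne'], hu⟩
    · intro r hr hr'
      simp [hr] at hr'
    · intro r hr hr' t hrt ht ht'
      have : r = w := by simpa [hr'] using hr
      subst this
      have h1 := hc t ht hrt
      have h2 := hB.1.d12 hG ht
      obtain ⟨o, o1, o2, o3⟩ := hG.other_white (B := B) (y := t) (by omega) r
      exact ⟨o, by simp [o1, o2], o3⟩
  have := hB.2 _ hval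
  rw [card_insert_of_notMem hw] at this
  omega

/-- `t` white whose black neighbours are contained in one B1 vertex must be in W3 -/
theorem one_B1 (hG : Cub G) (hB : Mx G B) {t y : V} (ht : t ∉ B) (hy : d G B y = 1)
    (h : ∀ s ∈ B, G.Adj t s → s = y) (hty : G.Adj t y) (hyB : y ∈ B) : False := by
  have : d G B t ≤ 1 := by
    unfold d
    rw [card_le_one]
    intro a ha b hb
    simp only [mem_filter, mem_univ, true_and] at ha hb
    rw [h a ha.2 ha.1, h b hb.2 hb.1]
  obtain ⟨o, -, o2, o3⟩ := hG.other_white (B := B) this t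
  obtain ⟨x, x1, x2, x3⟩ := F1 hG hB ht o3 o2 hty hyB
  rw [h x x1 x2] at x3
  omega

theorem mem_W3 {t : V} : t ∈ W3 G B ↔ t ∉ B ∧ ∀ s, G.Adj t s → s ∉ B := by
  simp [W3]

theorem F2a (hG : Cub G) (hB : Mx G B) {v v' : V} (h : v ∈ W3 G B) (h' : v' ∈ W3 G B) :
    ¬ G.Adj v v' := by
  intro hv
  rw [mem_W3] at h h'
  obtain ⟨b, c, t1⟩ := hG.tr1 hv
  obtain ⟨b', c', t2⟩ := hG.tr1 hv.symm
  have e1 := t1.a2.ne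
  have e2 := t2.a2.ne
  have f1 := t1.a2
  have f2 := t2.a2
  have hval : Valid G (insert v (insert v' B)) := by
    apply valid_move hB.1
    · intro t ht ht'
      have : t = v ∨ t = v' := by simpa [ht'] using ht
      rcases this with rfl | rfl
      · refine ⟨⟨v', by simp, hv⟩, b, ?_, t1.a2⟩
        simp [h.2 _ t1.a2, e1.symm, t1.1.symm]
      · refine ⟨⟨v, by simp, hv.symm⟩, b', ?_, t2.a2⟩
        simp [h'.2 _ t2.a2, e2.symm, t2.1.symm]
    · intro r hr hr'
      simp [hr] at hr'
    · intro r hr hr' t hrt ht ht'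
      have : r = v ∨ r = v' := by simpa [hr'] using hr
      rcases this with rfl | rfl
      · exact absurd ht (h.2 _ hrt)
      · exact absurd ht (h'.2 _ hrt)
  have := hB.2 _ hval
  rw [card_insert_of_notMem (by simp [hv.ne, h.1]), card_insert_of_notMem h'.1] at this
  omega

theorem card_er (B : Finset V) (r : V) : B.card ≤ (B.erase r).card + 1 := by
  have := pred_card_le_card_erase (s := B) (a := r)
  omega

theorem F2b_aux (hG : Cub G) (hB : Mx G B) {v a x y z c : V} (h : v ∈ W3 G B)
    (ha : U2 G B a x v c) (hx : K2 G B x y z a) (hy : d G B y = 1) : False := by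
  rw [mem_W3] at h
  obtain ⟨e, f, t1⟩ := hG.tr1 ha.tr.a2.symm
  have he := h.2 e t1.a2
  have n1 := t1.a2.ne; have n2 := t1.1; have n3 := ha.tr.2.2.1; have n4 := ha.tr.a3.ne
  have n5 := hx.tr.a1.ne; have n6 := ha.tr.a2.ne
  have m1 := ha.mem; have m2 := ha.h3; have m3 := hx.mem; have m4 := hx.h1; have m5 := h.1
  have hval : Valid G (insert v (insert a (B.erase y))) := by
    apply valid_move hB.1
    · intro t ht ht'
      have : t = v ∨ t = a := by simpa [ht'] using ht
      rcases this with rfl | rfl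
      · refine ⟨⟨a, by simp, ha.tr.a2.symm⟩, e, ?_, t1.a2⟩
        simp only [mem_insert, mem_erase]; grind
      · refine ⟨⟨x, ?_, ha.tr.a1⟩, c, ?_, ha.tr.a3⟩ <;>
        · simp only [mem_insert, mem_erase]; grind
    · intro r hr hr' t hrt ht ht'
      have : r = y := by
        simp only [mem_insert, mem_erase] at hr'; tauto
      subst this
      have : t = x := ub hy.le hrt hx.tr.a1.symm ht m3
      subst this
      exact ⟨a, by simp, ha.tr.a1.symm⟩
    · intro r hr hr' t hrt ht ht'
      have : r = v ∨ r = a := by simpa [hr'] using hr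
      rcases this with rfl | rfl
      · exact absurd ht (h.2 _ hrt)
      · rcases ha.tr.cases hrt with rfl | rfl | rfl
        · refine ⟨y, ?_, hx.tr.a1⟩
          simp only [mem_insert, mem_erase]; grind
        · exact absurd ht m5
        · exact absurd ht m2
  have := hB.2 _ hval
  rw [card_insert_of_notMem (by simp [n6.symm, h.1]), card_insert_of_notMem (by simp [m1])] at this
  have := card_er B y
  omega

theorem F2b_aux2 (hG : Cub G) (hB : Mx G B) {v a x y z c : V} (h : v ∈ W3 G B)
    (ha : U2 G B a x v c) (hx : K2 G B x y z a) (hy : d G B y = 2) (hz : d G B z = 2) : False := by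
  rw [mem_W3] at h
  obtain ⟨e, f, t1⟩ := hG.tr1 ha.tr.a2.symm
  have he := h.2 e t1.a2
  have n1 := t1.a2.ne; have n2 := t1.1; have n3 := ha.tr.2.2.1; have n4 := ha.tr.a3.ne
  have n5 := hx.tr.a1.ne; have n6 := ha.tr.a2.ne
  have m1 := ha.mem; have m2 := ha.h3; have m3 := hx.mem; have m4 := hx.h1; have m5 := h.1
  have hval : Valid G (insert v (insert a (B.erase x))) := by
    apply valid_move hB.1
    · intro t ht ht'
      have : t = v ∨ t = a := by simpa [ht'] using ht
      rcases this with rfl | rfl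
      · refine ⟨⟨a, by simp, ha.tr.a2.symm⟩, e, ?_, t1.a2⟩
        simp only [mem_insert, mem_erase]; grind
      · refine ⟨⟨v, by simp, ha.tr.a2⟩, x, ?_, ha.tr.a1⟩
        · simp only [mem_insert, mem_erase]; grind
    · intro r hr hr' t hrt ht ht'
      have : r = x := by
        simp only [mem_insert, mem_erase] at hr'; tauto
      subst this
      have hd : d G B t = 2 := by
        rcases hx.tr.cases hrt with rfl | rfl | rfl
        · exact hy
        · exact hz
        · exact absurd ht m1
      obtain ⟨o, o1, o2, o3⟩ := hG.other_black hd.ge r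
      exact ⟨o, by simp [o1, o2], o3⟩
    · intro r hr hr' t hrt ht ht'
      have : r = v ∨ r = a := by simpa [hr'] using hr
      rcases this with rfl | rfl
      · exact absurd ht (h.2 _ hrt)
      · rcases ha.tr.cases hrt with rfl | rfl | rfl
        · simp only [mem_insert, mem_erase] at ht'; grind
        · exact absurd ht m5
        · exact absurd ht m2
  have := hB.2 _ hval
  rw [card_insert_of_notMem (by simp [n6.symm, h.1]), card_insert_of_notMem (by simp [m1])] at this
  have := card_er B x
  omega

theorem K2.swap {x y z v : V} (h : K2 G B x y z v) : K2 G B x z y v :=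
  ⟨h.mem,
    ⟨h.tr.1.symm, h.tr.2.2.1, h.tr.2.1, fun t => by rw [h.tr.2.2.2]; tauto⟩, h.h2, h.h1, h.h3⟩

theorem K2.d {x y z v : V} (h : K2 G B x y z v) : d G B x = 2 := by
  rw [h.tr.d_eq, if_pos h.h1, if_pos h.h2, if_neg h.h3]
theorem K1.d {x y z v : V} (h : K1 G B x y z v) : RD.d G B x = 1 := by
  rw [h.tr.d_eq, if_pos h.h1, if_neg h.h2, if_neg h.h3]

/-- normal form of a B2 vertex with a known white neighbour -/
theorem Cub.k2 (hG : Cub G) {x v : V} (hx : x ∈ B) (hd : d G B x = 2) (hv : v ∉ B)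
    (h : G.Adj x v) : ∃ y z, K2 G B x y z v := by
  obtain ⟨y, z, t⟩ := hG.tr1 h
  have := t.d_eq (B := B)
  rw [hd, if_neg hv] at this
  have hy : y ∈ B := by by_contra hc; rw [if_neg hc] at this; grind
  have hz : z ∈ B := by by_contra hc; rw [if_neg hc] at this; grind
  exact ⟨y, z, hx, t.rot, hy, hz, hv⟩

/-- normal form of a B2 vertex with a known white neighbour and a known black neighbour -/
theorem Cub.k2' (hG : Cub G) {x v y : V} (hx : x ∈ B) (hd : d G B x = 2) (hv : v ∉ B)
    (h : G.Adj x v) (hy : y ∈ B) (h' : G.Adj x y) : ∃ z, K2 G B x y z v := by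
  obtain ⟨a, b, k⟩ := hG.k2 hx hd hv h
  rcases k.tr.cases h' with rfl | rfl | rfl
  · exact ⟨_, k⟩
  · exact ⟨_, k.swap⟩
  · exact absurd hy hv

/-- normal form of a B1 vertex with a known black neighbour and white neighbour -/
theorem Cub.k1 (hG : Cub G) {x v y : V} (hx : x ∈ B) (hd : d G B x = 1) (hv : v ∉ B)
    (h : G.Adj x v) (hy : y ∈ B) (h' : G.Adj x y) : ∃ z, K1 G B x y v z := by
  obtain ⟨z, t⟩ := hG.tr2 h' h (by rintro rfl; exact hv hy)
  have := t.d_eq (B := B)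
  rw [hd, if_neg hv, if_pos hy] at this
  have hz : z ∉ B := by intro hc; rw [if_pos hc] at this; omega
  exact ⟨z, hx, t, hy, hv, hz⟩

theorem F2b (hG : Cub G) (hB : Mx G B) {v a x c : V} (h : v ∈ W3 G B)
    (ha : U2 G B a x v c) : False := by
  obtain ⟨x', x1, x2, x3⟩ := F1 hG hB ha.mem ha.tr.a2 ha.h2 ha.tr.a1 ha.h1
  obtain rfl : x' = x := by
    rcases ha.tr.cases x2 with rfl | rfl | rfl
    · rfl
    · exact absurd x1 ha.h2
    · exact absurd x1 ha.h3
  obtain ⟨y, z, k⟩ := hG.k2 x1 x3 ha.mem x2.symm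
  rcases hB.1.d12 hG k.h1 with hy | hy
  · exact F2b_aux hG hB h ha k hy
  rcases hB.1.d12 hG k.h2 with hz | hz
  · exact F2b_aux hG hB h ha k.swap hz
  exact F2b_aux2 hG hB h ha k hy hz

end basic
end RD

namespace RD
open Finset Classical
set_option linter.unusedSectionVars false
variable {V : Type*} [Fintype V] {G : SimpleGraph V} {B : Finset V}

theorem F6 (hG : Cub G) (hB : Opt G B) {a p q α p1 p2 : V} (ha : U1 G B a p q α)
    (hp : K2 G B p p1 p2 a) (hq : d G B q = 1) (h1 : d G B p1 = 2) (h2 : d G B p2 = 2) :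
    False := by
  have n1 := ha.tr.1; have n2 := ha.tr.a3.ne; have n3 := hp.tr.a1.ne; have n4 := hp.tr.a2.ne
  have m1 := ha.mem; have m2 := ha.h1; have m3 := ha.h2; have m4 := ha.h3
  have m5 := hp.h1; have m6 := hp.h2
  have hval : Valid G (insert a (B.erase p)) := by
    apply valid_move hB.valid
    · intro t ht ht'
      obtain rfl : t = a := by simpa [ht'] using ht
      refine ⟨⟨q, ?_, ha.tr.a2⟩, α, ?_, ha.tr.a3⟩ <;>
      · simp only [mem_insert, mem_erase]; grind
    · intro r hr hr' t hrt ht ht'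
      obtain rfl : r = p := by
        simp only [mem_insert, mem_erase] at hr'; tauto
      have hd : d G B t = 2 := by
        rcases hp.tr.cases hrt with rfl | rfl | rfl
        · exact h1
        · exact h2
        · exact absurd ht m1
      obtain ⟨o, o1, o2, o3⟩ := hG.other_black hd.ge r
      exact ⟨o, by simp [o1, o2], o3⟩
    · intro r hr hr' t hrt ht ht'
      obtain rfl : r = a := by simpa [hr'] using hr
      rcases ha.tr.cases hrt with rfl | rfl | rfl
      · simp only [mem_insert, mem_erase] at ht'; grind
      · obtain ⟨o, o1, o2, o3⟩ := hG.other_white hq.le r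
        exact ⟨o, by simp [o1, o2], o3⟩
      · exact absurd ht m4
  refine hB.drop hval ?_ ?_ ?_
  · rw [card_insert_of_notMem (by simp [m1])]
    exact card_er B p
  · have e1 := E_erase_le (G := G) (B := B) p (k := 1) (wn_le1 hp.tr (by simp [n3.symm, m5])
      (by simp [n4.symm, m6]))
    have e2 := E_insert_le (G := G) (B := B.erase p) (t := a) (k := 2) (by simp [m1])
      (wn_ge2 ha.tr.swap (by simp) (by simp [m4]))
    omega
  · intro t ht
    rw [mem_W3] at ht ⊢
    have hta : t ≠ a := by rintro rfl; simp at ht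
    have htp : t ≠ p := by rintro rfl; exact ht.2 a hp.tr.a3 (by simp)
    have htB : t ∉ B := by intro h; exact ht.1 (by simp [htp, h])
    refine ⟨htB, fun s hs hsB => ?_⟩
    have : s = p := by
      have := ht.2 s hs
      simp only [mem_insert, mem_erase] at this; tauto
    subst this
    exact hta (hG.uw hp.d.ge hs.symm hp.tr.a3 htB m1)

theorem L5 (hG : Cub G) (hB : Opt G B) {a p q v y z : V} (ha : U1 G B a p q v)
    (hp : K2 G B p y z a) (hq : d G B q = 1) (h1 : d G B y = 1) (hv : v ∈ W3 G B) : False := by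
  have n1 := ha.tr.1; have n2 := ha.tr.a3.ne; have n3 := hp.tr.a1.ne; have n4 := hp.tr.a2.ne
  have m1 := ha.mem; have m2 := ha.h1; have m3 := ha.h2; have m4 := ha.h3
  have m5 := hp.h1; have m6 := hp.h2
  have hval : Valid G (insert a (B.erase y)) := by
    apply valid_move hB.valid
    · intro t ht ht'
      obtain rfl : t = a := by simpa [ht'] using ht
      refine ⟨⟨p, ?_, ha.tr.a1⟩, v, ?_, ha.tr.a3⟩ <;>
      · simp only [mem_insert, mem_erase]; grind
    · intro r hr hr' t hrt ht ht'
      obtain rfl : r = y := by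
        simp only [mem_insert, mem_erase] at hr'; tauto
      obtain rfl := ub h1.le hrt hp.tr.a1.symm ht m2
      exact ⟨a, by simp, hp.tr.a3⟩
    · intro r hr hr' t hrt ht ht'
      obtain rfl : r = a := by simpa [hr'] using hr
      rcases ha.tr.cases hrt with rfl | rfl | rfl
      · refine ⟨y, ?_, hp.tr.a1⟩
        simp only [mem_insert, mem_erase]; grind
      · obtain ⟨o, o1, o2, o3⟩ := hG.other_white hq.le r
        exact ⟨o, by simp [o1, o2], o3⟩
      · exact absurd ht m4
  have hc : B.card ≤ (insert a (B.erase y)).card := by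
    rw [card_insert_of_notMem (by simp [m1])]
    exact card_er B y
  have := hB.h2 _ hval (le_antisymm (hB.h1 _ hval) hc)
  obtain ⟨b, c, ty⟩ := hG.tr1 hp.tr.a1.symm
  have e1 := E_erase_le (G := G) (B := B) y (k := 2) (wn_le2 ty (by simp [n3, m2]))
  have e2 := E_insert_le (G := G) (B := B.erase y) (t := a) (k := 1) (by simp [m1])
      (wn_ge1 ha.tr.a3 (by simp [m4]))
  have : W3 G (insert a (B.erase y)) ⊂ W3 G B := by
    rw [ssubset_iff_of_subset]
    · exact ⟨v, hv, fun h => (mem_W3.1 h).2 a ha.tr.a3.symm (by simp)⟩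
    intro t ht
    rw [mem_W3] at ht ⊢
    have hta : t ≠ a := by rintro rfl; simp at ht
    have hty : t ≠ y := by
      rintro rfl; exact ht.2 p hp.tr.a1.symm (by simp [n3, m2])
    have htB : t ∉ B := by intro h; exact ht.1 (by simp [hty, h])
    have key : ∀ s ∈ B, G.Adj t s → s = y := by
      intro s hsB hs
      have := ht.2 s hs
      simp only [mem_insert, mem_erase] at this; tauto
    refine ⟨htB, fun s hs hsB => ?_⟩
    obtain rfl := key s hsB hs
    exact one_B1 hG hB.mx htB h1 key hs hsB
  have := card_lt_card this
  omega

theorem iia (hG : Cub G) (hB : Opt G B) {v x u w y z p w2 yp p2 : V} (hv : U2 G B v x u w)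
    (hx : K2 G B x y z v) (hy : d G B y = 2) (hz : d G B z = 2) (hw : U2 G B w p v w2)
    (hp : K2 G B p yp p2 w) (hyp : d G B yp = 1) : False := by
  have m1 := hv.mem; have m2 := hw.mem; have m3 := hv.h2; have m4 := hw.h3
  have m5 := hx.mem; have m6 := hp.mem; have m7 := hx.h1; have m8 := hx.h2; have m9 := hp.h1
  have n1 := hv.tr.2.2.1; have n2 := hw.tr.2.2.1; have n3 := hv.tr.a3.ne
  have n5 := hv.tr.a2.ne; have n6 := hw.tr.a3.ne
  have n4 : p ≠ x := by
    rintro rfl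
    exact n3 (hG.uw hx.d.ge hx.tr.a3 hp.tr.a3 m1 m2)
  have dx := hx.d; have dp := hp.d
  have n7 := hx.tr.a1.ne; have n8 := hx.tr.a2.ne
  have hval : Valid G (insert v (insert w ((B.erase x).erase yp))) := by
    apply valid_move hB.valid
    · intro t ht ht'
      have : t = v ∨ t = w := by simpa [ht'] using ht
      rcases this with rfl | rfl
      · refine ⟨⟨w, by simp, hv.tr.a3⟩, u, ?_, hv.tr.a2⟩
        simp only [mem_insert, mem_erase]; grind
      · refine ⟨⟨v, by simp, hw.tr.a2⟩, w2, ?_, hw.tr.a3⟩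
        simp only [mem_insert, mem_erase]; grind
    · intro r hr hr' t hrt ht ht'
      by_cases htp : t = p
      · subst htp; exact ⟨w, by simp, hp.tr.a3⟩
      have : r = x ∨ r = yp := by
        simp only [mem_insert, mem_erase] at hr'; tauto
      rcases this with rfl | rfl
      · have hd : d G B t = 2 := by
          rcases hx.tr.cases hrt with rfl | rfl | rfl
          · exact hy
          · exact hz
          · exact absurd ht m1
        obtain ⟨o, o1, o2, o3⟩ := hG.other_black hd.ge r
        refine ⟨o, ?_, o3⟩
        have : o ≠ yp := by
          rintro rfl
          exact htp (ub hyp.le o3.symm hp.tr.a1.symm ht m6)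
        simp [o1, o2, this]
      · exact absurd (ub hyp.le hrt hp.tr.a1.symm ht m6) htp
    · intro r hr hr' t hrt ht ht'
      have : r = v ∨ r = w := by simpa [hr'] using hr
      rcases this with rfl | rfl
      · rcases hv.tr.cases hrt with rfl | rfl | rfl
        · simp only [mem_insert, mem_erase] at ht'; grind
        · exact absurd ht m3
        · exact absurd ht m2
      · rcases hw.tr.cases hrt with rfl | rfl | rfl
        · refine ⟨yp, ?_, hp.tr.a1⟩
          simp only [mem_insert, mem_erase]; grind
        · exact absurd ht m1
        · exact absurd ht m4
  have hpy := hp.tr.a1.ne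
  refine hB.drop hval ?_ ?_ ?_
  · rw [card_insert_of_notMem (by simp [m1, n3]), card_insert_of_notMem (by simp [m2])]
    have := card_er B x; have := card_er (B.erase x) yp
    omega
  · obtain ⟨b, c, ty⟩ := hG.tr1 hp.tr.a1.symm
    have e1 := E_erase_le (G := G) (B := B) x (k := 1) (wn_le1 hx.tr (by simp [n7.symm, m7])
      (by simp [n8.symm, m8]))
    have e2 := E_erase_le (G := G) (B := B.erase x) yp (k := 2) (wn_le2 ty (by simp [hpy, m6, n4]))
    have e3 := E_insert_le (G := G) (B := (B.erase x).erase yp) (t := w) (k := 2) (by simp [m2])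
      (wn_ge2 hw.tr.rot (by simp [m1]) (by simp [m4]))
    have e4 := E_insert_le (G := G) (B := insert w ((B.erase x).erase yp)) (t := v) (k := 2)
      (by simp [m1, n3])
      (wn_ge2 hv.tr (by simp; grind) (by simp; grind))
    omega
  · intro t ht
    rw [mem_W3] at ht ⊢
    have hta : t ≠ v := by rintro rfl; simp at ht
    have htb : t ≠ w := by rintro rfl; simp at ht
    have htx : t ≠ x := by rintro rfl; exact ht.2 v hx.tr.a3 (by simp)
    have hty : t ≠ yp := by
      rintro rfl; exact ht.2 p hp.tr.a1.symm (by simp [hpy, n4, m6])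
    have htB : t ∉ B := by intro h; exact ht.1 (by simp [hty, htx, h])
    have key : ∀ s ∈ B, G.Adj t s → s = yp := by
      intro s hsB hs
      have := ht.2 s hs
      by_contra hc
      have hsx : s = x := by
        simp only [mem_insert, mem_erase] at this; tauto
      subst hsx
      exact hta (hG.uw dx.ge hs.symm hx.tr.a3 htB m1)
    refine ⟨htB, fun s hs hsB => ?_⟩
    obtain rfl := key s hsB hs
    exact one_B1 hG hB.mx htB hyp key hs hsB

theorem iib1 (hG : Cub G) (hB : Opt G B) {v x u w y z p w2 p2 : V} (hv : U2 G B v x u w)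
    (hx : K2 G B x y z v) (hy : d G B y = 2) (hw : U2 G B w p v w2)
    (hp : K2 G B p y p2 w) : False := by
  have m1 := hv.mem; have m2 := hw.mem; have m3 := hv.h2; have m4 := hw.h3
  have m5 := hx.mem; have m6 := hp.mem; have m7 := hx.h1; have m8 := hx.h2; have m9 := hp.h1
  have n1 := hv.tr.2.2.1; have n2 := hw.tr.2.2.1; have n3 := hv.tr.a3.ne
  have n5 := hv.tr.a2.ne; have n6 := hw.tr.a3.ne
  have n4 : x ≠ p := by
    rintro rfl
    exact n3 (hG.uw hx.d.ge hx.tr.a3 hp.tr.a3 m1 m2)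
  obtain ⟨r0, ty⟩ := hG.tr2 hx.tr.a1.symm hp.tr.a1.symm n4
  have hr0 : r0 ∉ B := by
    intro hc
    have := ty.d_eq (B := B)
    rw [if_pos m5, if_pos m6, if_pos hc] at this
    omega
  have hval : Valid G (insert v (insert w (B.erase y))) := by
    apply valid_move hB.valid
    · intro t ht ht'
      have : t = v ∨ t = w := by simpa [ht'] using ht
      rcases this with rfl | rfl
      · refine ⟨⟨w, by simp, hv.tr.a3⟩, u, ?_, hv.tr.a2⟩
        simp only [mem_insert, mem_erase]; grind
      · refine ⟨⟨v, by simp, hw.tr.a2⟩, w2, ?_, hw.tr.a3⟩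
        simp only [mem_insert, mem_erase]; grind
    · intro r hr hr' t hrt ht ht'
      obtain rfl : r = y := by
        simp only [mem_insert, mem_erase] at hr'; tauto
      rcases ty.cases hrt with rfl | rfl | rfl
      · exact ⟨v, by simp, hx.tr.a3⟩
      · exact ⟨w, by simp, hp.tr.a3⟩
      · exact absurd ht hr0
    · intro r hr hr' t hrt ht ht'
      have : r = v ∨ r = w := by simpa [hr'] using hr
      rcases this with rfl | rfl
      · rcases hv.tr.cases hrt with rfl | rfl | rfl
        · refine ⟨y, ?_, hx.tr.a1⟩
          simp only [mem_insert, mem_erase]; grind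
        · exact absurd ht m3
        · exact absurd ht m2
      · rcases hw.tr.cases hrt with rfl | rfl | rfl
        · refine ⟨y, ?_, hp.tr.a1⟩
          simp only [mem_insert, mem_erase]; grind
        · exact absurd ht m1
        · exact absurd ht m4
  have := hB.h1 _ hval
  rw [card_insert_of_notMem (by simp [m1, n3]), card_insert_of_notMem (by simp [m2])] at this
  have := card_er B y
  omega

theorem iib2 (hG : Cub G) (hB : Opt G B) {v x u w y z p w2 p1 p2 : V} (hv : U2 G B v x u w)
    (hx : K2 G B x y z v) (hy : d G B y = 2) (hz : d G B z = 2) (hw : U2 G B w p v w2)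
    (hp : K2 G B p p1 p2 w) (hp1 : d G B p1 = 2) (hp2 : d G B p2 = 2)
    (hno : ∀ t ∈ B, G.Adj x t → G.Adj p t → False) (hp1x : p1 ≠ x) : False := by
  have m1 := hv.mem; have m2 := hw.mem; have m3 := hv.h2; have m4 := hw.h3
  have m5 := hx.mem; have m6 := hp.mem; have m7 := hx.h1; have m8 := hx.h2; have m9 := hp.h1
  have n1 := hv.tr.2.2.1; have n2 := hw.tr.2.2.1; have n3 := hv.tr.a3.ne
  have n5 := hv.tr.a2.ne; have n6 := hw.tr.a3.ne
  have n4 : p ≠ x := by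
    rintro rfl
    exact n3 (hG.uw hx.d.ge hx.tr.a3 hp.tr.a3 m1 m2)
  have dx := hx.d; have dp := hp.d
  have n7 := hx.tr.a1.ne; have n8 := hx.tr.a2.ne; have n9 := hp.tr.a1.ne
  have hval : Valid G (insert v (insert w ((B.erase x).erase p))) := by
    apply valid_move hB.valid
    · intro t ht ht'
      have : t = v ∨ t = w := by simpa [ht'] using ht
      rcases this with rfl | rfl
      · refine ⟨⟨w, by simp, hv.tr.a3⟩, u, ?_, hv.tr.a2⟩
        simp only [mem_insert, mem_erase]; grind
      · refine ⟨⟨v, by simp, hw.tr.a2⟩, w2, ?_, hw.tr.a3⟩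
        simp only [mem_insert, mem_erase]; grind
    · intro r hr hr' t hrt ht ht'
      have : r = x ∨ r = p := by
        simp only [mem_insert, mem_erase] at hr'; tauto
      have hd : d G B t = 2 := by
        rcases this with rfl | rfl
        · rcases hx.tr.cases hrt with rfl | rfl | rfl
          · exact hy
          · exact hz
          · exact absurd ht m1
        · rcases hp.tr.cases hrt with rfl | rfl | rfl
          · exact hp1
          · exact hp2
          · exact absurd ht m2
      obtain ⟨o, o1, o2, o3⟩ := hG.other_black hd.ge r
      refine ⟨o, ?_, o3⟩
      have : o ≠ x ∧ o ≠ p := by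
        rcases this with rfl | rfl
        · refine ⟨o1, ?_⟩
          rintro rfl; exact hno t ht hrt o3.symm
        · refine ⟨?_, o1⟩
          rintro rfl; exact hno t ht o3.symm hrt
      simp [this, o2]
    · intro r hr hr' t hrt ht ht'
      have : r = v ∨ r = w := by simpa [hr'] using hr
      rcases this with rfl | rfl
      · rcases hv.tr.cases hrt with rfl | rfl | rfl
        · simp only [mem_insert, mem_erase] at ht'; grind
        · exact absurd ht m3
        · exact absurd ht m2
      · rcases hw.tr.cases hrt with rfl | rfl | rfl
        · simp only [mem_insert, mem_erase] at ht'; grind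
        · exact absurd ht m1
        · exact absurd ht m4
  refine hB.drop hval ?_ ?_ ?_
  · rw [card_insert_of_notMem (by simp [m1, n3]), card_insert_of_notMem (by simp [m2])]
    have := card_er B x; have := card_er (B.erase x) p
    omega
  · have e1 := E_erase_le (G := G) (B := B) x (k := 1) (wn_le1 hx.tr (by simp [n7.symm, m7])
      (by simp [n8.symm, m8]))
    have e2 := E_erase_le (G := G) (B := B.erase x) p (k := 2)
      (wn_le2 hp.tr (by simp [n9.symm, m9, hp1x]))
    have e3 := E_insert_le (G := G) (B := (B.erase x).erase p) (t := w) (k := 3) (by simp [m2])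
      (wn_ge3 hw.tr.rot (by simp [m1]) (by simp [m4]) (by simp))
    have e4 := E_insert_le (G := G) (B := insert w ((B.erase x).erase p)) (t := v) (k := 2)
      (by simp [m1, n3])
      (wn_ge2 hv.tr (by simp; grind) (by simp; grind))
    omega
  · intro t ht
    rw [mem_W3] at ht ⊢
    have hta : t ≠ v := by rintro rfl; simp at ht
    have htb : t ≠ w := by rintro rfl; simp at ht
    have htx : t ≠ x := by rintro rfl; exact ht.2 v hx.tr.a3 (by simp)
    have hty : t ≠ p := by rintro rfl; exact ht.2 w hp.tr.a3 (by simp)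
    have htB : t ∉ B := by intro h; exact ht.1 (by simp [hty, htx, h])
    refine ⟨htB, fun s hs hsB => ?_⟩
    have := ht.2 s hs
    have hs' : s = x ∨ s = p := by
      simp only [mem_insert, mem_erase] at this; tauto
    rcases hs' with rfl | rfl
    · exact hta (hG.uw dx.ge hs.symm hx.tr.a3 htB m1)
    · exact htb (hG.uw dp.ge hs.symm hp.tr.a3 htB m2)

/-- deep vertices are not adjacent to W2 -/
theorem ii (hG : Cub G) (hB : Opt G B) {v x u w y z p w2 : V} (hv : U2 G B v x u w)
    (hx : K2 G B x y z v) (hy : d G B y = 2) (hz : d G B z = 2) (hw : U2 G B w p v w2) :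
    False := by
  obtain ⟨x', x1, x2, x3⟩ := F1 hG hB.mx hw.mem hw.tr.a2 hw.h2 hw.tr.a1 hw.h1
  obtain rfl : x' = p := by
    rcases hw.tr.cases x2 with rfl | rfl | rfl
    · rfl
    · exact absurd x1 hw.h2
    · exact absurd x1 hw.h3
  obtain ⟨p1, p2, k⟩ := hG.k2 x1 x3 hw.mem x2.symm
  rcases hB.valid.d12 hG k.h1 with h1 | h1
  · exact iia hG hB hv hx hy hz hw k h1
  rcases hB.valid.d12 hG k.h2 with h2 | h2
  · exact iia hG hB hv hx hy hz hw k.swap h2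
  by_cases hno : ∃ t ∈ B, G.Adj x t ∧ G.Adj x' t
  · obtain ⟨t, t1, t2, t3⟩ := hno
    obtain ⟨z1, kx⟩ := hG.k2' hx.mem hx.d hv.mem hx.tr.a3 t1 t2
    obtain ⟨z2, kp⟩ := hG.k2' x1 x3 hw.mem x2.symm t1 t3
    refine iib1 hG hB hv kx ?_ hw kp
    rcases hx.tr.cases t2 with rfl | rfl | rfl
    · exact hy
    · exact hz
    · exact absurd t1 hv.mem
  · push Not at hno
    by_cases h : p1 = x
    · exact iib2 hG hB hv hx hy hz hw k.swap h2 h1 hno (by rintro rfl; exact k.tr.1 h)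
    · exact iib2 hG hB hv hx hy hz hw k h1 h2 hno h

end RD

namespace RD
open Finset Classical
set_option linter.unusedSectionVars false
variable {V : Type*} [Fintype V] {G : SimpleGraph V} {B : Finset V}

/-- a white vertex all of whose neighbours are black with one black neighbour -/
def Bad (G : SimpleGraph V) (B : Finset V) (a : V) : Prop :=
  a ∉ B ∧ ∀ s, G.Adj a s → s ∈ B ∧ d G B s = 1

theorem GoodV0 (hG : Cub G) (hB : Opt G B) {τ x c c' y z a : V} (ht0 : U2 G B τ x c c')
    (hx : K2 G B x y z τ) (hy : d G B y = 1) (ha : Bad G B a) (hay : G.Adj a y) : False := by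
  obtain ⟨s, s2, ta⟩ := hG.tr1 hay
  have hs := ha.2 s ta.a2
  have m1 := ht0.mem; have m2 := ht0.h1; have m3 := ht0.h2; have m4 := hx.h1; have m5 := ha.1
  have m6 := hs.1; have m7 := ht0.h3
  have n1 := ta.1; have n2 := hx.tr.a1.ne; have n3 := ht0.tr.a2.ne
  have dx := hx.d
  have n4 : τ ≠ a := by
    rintro rfl; exact m3 (ha.2 _ ht0.tr.a2).1
  have n5 : c ≠ a := by
    rintro rfl; exact m1 (ha.2 _ ht0.tr.a2.symm).1
  have hval : Valid G (insert τ (insert a (B.erase y))) := by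
    apply valid_move hB.valid
    · intro t ht ht'
      have : t = τ ∨ t = a := by simpa [ht'] using ht
      rcases this with rfl | rfl
      · refine ⟨⟨x, ?_, ht0.tr.a1⟩, c, ?_, ht0.tr.a2⟩ <;>
        · simp only [mem_insert, mem_erase]; grind
      · refine ⟨⟨s, ?_, ta.a2⟩, y, ?_, ta.a1⟩ <;>
        · simp only [mem_insert, mem_erase]; grind
    · intro r hr hr' t hrt ht ht'
      obtain rfl : r = y := by
        simp only [mem_insert, mem_erase] at hr'; tauto
      obtain rfl := ub hy.le hrt hx.tr.a1.symm ht m2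
      exact ⟨τ, by simp, hx.tr.a3⟩
    · intro r hr hr' t hrt ht ht'
      have : r = τ ∨ r = a := by simpa [hr'] using hr
      rcases this with rfl | rfl
      · rcases ht0.tr.cases hrt with rfl | rfl | rfl
        · refine ⟨y, ?_, hx.tr.a1⟩
          simp only [mem_insert, mem_erase]; grind
        · exact absurd ht m3
        · exact absurd ht m7
      · have hd := (ha.2 t hrt).2
        obtain ⟨o, o1, o2, o3⟩ := hG.other_white hd.le r
        refine ⟨o, ?_, o3⟩
        have : o ≠ τ := by
          rintro rfl
          rcases ht0.tr.cases o3.symm with rfl | rfl | rfl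
          · omega
          · exact absurd ht m3
          · exact absurd ht m7
        simp [o1, o2, this]
  have := hB.h1 _ hval
  rw [card_insert_of_notMem (by simp [m1, n4]), card_insert_of_notMem (by simp [m5])] at this
  have := card_er B y
  omega

theorem GoodWeak (hG : Cub G) (hB : Opt G B) {j p q α y z a : V} (hj : U1 G B j p q α)
    (hp : K2 G B p y z j) (hq : d G B q = 1) (hy : d G B y = 1) (ha : Bad G B a)
    (hay : G.Adj a y) : G.Adj q a ∧ q ≠ y := by
  by_contra hcon
  obtain ⟨s, s2, ta⟩ := hG.tr1 hay
  have hs := ha.2 s ta.a2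
  have m1 := hj.mem; have m2 := hj.h1; have m3 := hj.h2; have m4 := hp.h1; have m5 := ha.1
  have m6 := hs.1; have m7 := hj.h3
  have n1 := ta.1; have n2 := hp.tr.a1.ne; have n3 := hj.tr.a3.ne
  have dx := hp.d
  have n4 : j ≠ a := by
    rintro rfl; exact m7 (ha.2 _ hj.tr.a3).1
  have n5 : α ≠ a := by
    rintro rfl; exact m1 (ha.2 _ hj.tr.a3.symm).1
  have hval : Valid G (insert j (insert a (B.erase y))) := by
    apply valid_move hB.valid
    · intro t ht ht'
      have : t = j ∨ t = a := by simpa [ht'] using ht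
      rcases this with rfl | rfl
      · refine ⟨⟨p, ?_, hj.tr.a1⟩, α, ?_, hj.tr.a3⟩ <;>
        · simp only [mem_insert, mem_erase]; grind
      · refine ⟨⟨s, ?_, ta.a2⟩, y, ?_, ta.a1⟩ <;>
        · simp only [mem_insert, mem_erase]; grind
    · intro r hr hr' t hrt ht ht'
      obtain rfl : r = y := by
        simp only [mem_insert, mem_erase] at hr'; tauto
      obtain rfl := ub hy.le hrt hp.tr.a1.symm ht m2
      exact ⟨j, by simp, hp.tr.a3⟩
    · intro r hr hr' t hrt ht ht'
      have hty : t ≠ y := by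
        rintro rfl; simp only [mem_insert, mem_erase] at ht'; grind
      have : r = j ∨ r = a := by simpa [hr'] using hr
      rcases this with rfl | rfl
      · rcases hj.tr.cases hrt with rfl | rfl | rfl
        · refine ⟨y, ?_, hp.tr.a1⟩
          simp only [mem_insert, mem_erase]; grind
        · obtain ⟨o, o1, o2, o3⟩ := hG.other_white hq.le r
          refine ⟨o, ?_, o3⟩
          have : o ≠ a := by
            rintro rfl
            exact hcon ⟨o3, hty⟩
          simp [o1, o2, this]
        · exact absurd ht m7
      · have hd := (ha.2 t hrt).2
        obtain ⟨o, o1, o2, o3⟩ := hG.other_white hd.le r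
        refine ⟨o, ?_, o3⟩
        have : o ≠ j := by
          rintro rfl
          rcases hj.tr.cases o3.symm with rfl | rfl | rfl
          · omega
          · exact hcon ⟨hrt.symm, hty⟩
          · exact absurd ht m7
        simp [o1, o2, this]
  have := hB.h1 _ hval
  rw [card_insert_of_notMem (by simp [m1, n4]), card_insert_of_notMem (by simp [m5])] at this
  have := card_er B y
  omega

/-- the configuration around a type-D vertex -/
structure DC (G : SimpleGraph V) (B : Finset V) (v x u w y z p q yu p2 a b s q' : V) : Prop where
  hv : U2 G B v x u w
  hx : K2 G B x y z v
  hy : d G B y = 2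
  hz : d G B z = 2
  hu : U1 G B u p q v
  hp : K2 G B p yu p2 u
  hyu : K1 G B yu p a b
  ha : Bad G B a
  ta : Tr G a yu q s
  hq : K1 G B q q' u a
  hq' : d G B q' = 2

variable {v x u w y z p q yu p2 a b s q' : V}

theorem DC.px (h : DC G B v x u w y z p q yu p2 a b s q') (hG : Cub G) : p ≠ x := by
  rintro rfl
  exact h.hv.tr.a2.ne (hG.uw h.hx.d.ge h.hx.tr.a3 h.hp.tr.a3 h.hv.mem h.hu.mem)

theorem DC.qx (h : DC G B v x u w y z p q yu p2 a b s q') {t : V} (ht : t ∈ B)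
    (hxt : G.Adj x t) : d G B t = 2 := by
  rcases h.hx.tr.cases hxt with rfl | rfl | rfl
  · exact h.hy
  · exact h.hz
  · exact absurd ht h.hv.mem

theorem DC.ua (h : DC G B v x u w y z p q yu p2 a b s q') : u ≠ a := by
  rintro rfl; exact h.hv.mem (h.ha.2 _ h.hu.tr.a3).1
theorem DC.va (h : DC G B v x u w y z p q yu p2 a b s q') : v ≠ a := by
  rintro rfl; exact h.hu.mem (h.ha.2 _ h.hu.tr.a3.symm).1
theorem DC.wa (h : DC G B v x u w y z p q yu p2 a b s q') : w ≠ a := by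
  rintro rfl; exact h.hv.mem (h.ha.2 _ h.hv.tr.a3.symm).1

theorem DC.s_other (h : DC G B v x u w y z p q yu p2 a b s q') (hG : Cub G) :
    ∃ o, o ≠ a ∧ o ≠ v ∧ o ≠ u ∧ o ∉ B ∧ G.Adj s o := by
  obtain ⟨hsB, hs⟩ := h.ha.2 _ h.ta.a3
  obtain ⟨o, o1, o2, o3⟩ := hG.other_white hs.le a
  refine ⟨o, o1, ?_, ?_, o2, o3⟩
  · rintro rfl
    rcases h.hv.tr.cases o3.symm with e | e | e
    · have := h.hx.d; rw [← e] at this; omega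
    · exact h.hv.h2 (e ▸ hsB)
    · exact h.hv.h3 (e ▸ hsB)
  · rintro rfl
    rcases h.hu.tr.cases o3.symm with e | e | e
    · have := h.hp.d; rw [← e] at this; omega
    · exact h.ta.2.2.1 e.symm
    · exact h.hv.mem (e ▸ hsB)

theorem moveN (hG : Cub G) (hB : Opt G B) (h : DC G B v x u w y z p q yu p2 a b s q')
    (hne : ¬ G.Adj q' x) : False := by
  have m1 := h.hv.mem; have m2 := h.hu.mem; have m3 := h.ha.1; have m4 := h.hv.h3
  have m5 := h.hx.mem; have m6 := h.hp.mem; have m7 := h.hq.mem; have m8 := h.hyu.mem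
  have m9 := h.hx.h1; have m10 := h.hx.h2; have m11 := h.hq.h1
  have dx := h.hx.d; have dp := h.hp.d; have dq := h.hq.d; have dyu := h.hyu.d
  have dy := h.hy; have dz := h.hz; have dq' := h.hq'
  obtain ⟨ms, ds⟩ := h.ha.2 _ h.ta.a3
  have n1 := h.px hG; have n2 := h.ua; have n3 := h.va; have n4 := h.wa
  have n5 := h.hv.tr.2.2.1; have n6 := h.hv.tr.a2.ne; have n7 := h.hv.tr.a3.ne
  have n8 := h.ta.1; have n9 := h.ta.2.1; have n10 := h.ta.2.2.1
  have n11 := h.hx.tr.a1.ne; have n12 := h.hx.tr.a2.ne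
  have n13 : q' ≠ x := by
    rintro rfl; have := h.qx m7 h.hq.tr.a1.symm; omega
  have hval : Valid G (insert v (insert u (insert a (((B.erase yu).erase x).erase q)))) := by
    apply valid_move hB.valid
    · intro t ht ht'
      have : t = v ∨ t = u ∨ t = a := by simpa [ht'] using ht
      rcases this with rfl | rfl | rfl
      · refine ⟨⟨u, by simp, h.hv.tr.a2⟩, w, ?_, h.hv.tr.a3⟩
        simp only [mem_insert, mem_erase]; grind
      · refine ⟨⟨v, by simp, h.hu.tr.a3⟩, q, ?_, h.hu.tr.a2⟩
        simp only [mem_insert, mem_erase]; grind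
      · refine ⟨⟨s, ?_, h.ta.a3⟩, q, ?_, h.ta.a2⟩ <;>
        · simp only [mem_insert, mem_erase]; grind
    · intro r hr hr' t hrt ht ht'
      by_cases htp : t = p
      · subst htp; exact ⟨u, by simp, h.hp.tr.a3⟩
      have : r = yu ∨ r = x ∨ r = q := by
        simp only [mem_insert, mem_erase] at hr'; tauto
      have nyu : ∀ o, G.Adj t o → o ≠ yu := by
        rintro o ho rfl
        exact htp (ub dyu.le ho.symm h.hyu.tr.a1 ht m6)
      rcases this with rfl | rfl | rfl
      · exact absurd rfl (nyu r hrt.symm)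
      · obtain ⟨o, o1, o2, o3⟩ := hG.other_black (h.qx ht hrt).ge r
        refine ⟨o, ?_, o3⟩
        have : o ≠ q := by
          rintro rfl
          rw [ub dq.le o3.symm h.hq.tr.a1 ht m11] at hrt
          exact hne hrt.symm
        simp [o1, o2, this, nyu o o3]
      · obtain rfl := ub dq.le hrt h.hq.tr.a1 ht m11
        obtain ⟨o, o1, o2, o3⟩ := hG.other_black dq'.ge r
        refine ⟨o, ?_, o3⟩
        have : o ≠ x := by
          rintro rfl
          exact hne o3
        simp [o1, o2, this, nyu o o3]
    · intro r hr hr' t hrt ht ht'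
      simp only [mem_insert, mem_erase] at ht'
      have : r = v ∨ r = u ∨ r = a := by simpa [hr'] using hr
      rcases this with rfl | rfl | rfl
      · rcases h.hv.tr.cases hrt with rfl | rfl | rfl
        · grind
        · exact absurd ht m2
        · exact absurd ht m4
      · rcases h.hu.tr.cases hrt with rfl | rfl | rfl
        · refine ⟨yu, ?_, h.hp.tr.a1⟩
          simp only [mem_insert, mem_erase]; grind
        · grind
        · exact absurd ht m1
      · rcases h.ta.cases hrt with rfl | rfl | rfl
        · grind
        · grind
        · obtain ⟨o, o1, o2, o3, o4, o5⟩ := h.s_other hG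
          exact ⟨o, by simp [o1, o2, o3, o4], o5⟩
  refine hB.drop hval ?_ ?_ ?_
  · rw [card_insert_of_notMem (by simp [m1, n6, n3]), card_insert_of_notMem (by simp [m2, n2]),
      card_insert_of_notMem (by simp [m3])]
    have := card_er B yu; have := card_er (B.erase yu) x; have := card_er ((B.erase yu).erase x) q
    omega
  · have e1 := E_erase_le (G := G) (B := B) yu (k := 2) (wn_le2 h.hyu.tr
      (by simp only [mem_erase]; grind))
    have e2 := E_erase_le (G := G) (B := B.erase yu) x (k := 1) (wn_le1 h.hx.tr
      (by simp only [mem_erase]; grind) (by simp only [mem_erase]; grind))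
    have e3 := E_erase_le (G := G) (B := (B.erase yu).erase x) q (k := 2) (wn_le2 h.hq.tr
      (by simp only [mem_erase]; grind))
    have e4 := E_insert_le (G := G) (B := ((B.erase yu).erase x).erase q) (t := a) (k := 2)
      (by simp [m3]) (wn_ge2 h.ta (by simp) (by simp))
    have e5 := E_insert_le (G := G) (B := insert a (((B.erase yu).erase x).erase q)) (t := u)
      (k := 2) (by simp [m2, n2]) (wn_ge2 h.hu.tr.rot
      (by simp only [mem_insert, mem_erase]; grind) (by simp only [mem_insert, mem_erase]; grind))
    have e6 := E_insert_le (G := G) (B := insert u (insert a (((B.erase yu).erase x).erase q)))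
      (t := v) (k := 2) (by simp [m1, n6, n3]) (wn_ge2 h.hv.tr.rot.rot
      (by simp only [mem_insert, mem_erase]; grind) (by simp only [mem_insert, mem_erase]; grind))
    omega
  · intro t ht
    rw [mem_W3] at ht ⊢
    have hta : t ≠ v := by rintro rfl; simp at ht
    have htb : t ≠ u := by rintro rfl; simp at ht
    have htc : t ≠ a := by rintro rfl; simp at ht
    have htx : t ≠ x := by rintro rfl; exact ht.2 v h.hx.tr.a3 (by simp)
    have htq : t ≠ q := by rintro rfl; exact ht.2 u h.hq.tr.a2 (by simp)
    have hty : t ≠ yu := by rintro rfl; exact ht.2 a h.hyu.tr.a2 (by simp)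
    have htB : t ∉ B := by intro h; exact ht.1 (by simp [hty, htx, htq, h])
    have key : ∀ s ∈ B, G.Adj t s → s = yu := by
      intro s hsB hs
      have := ht.2 s hs
      by_contra hc
      have hsx : s = x ∨ s = q := by
        simp only [mem_insert, mem_erase] at this; tauto
      rcases hsx with rfl | rfl
      · exact hta (hG.uw dx.ge hs.symm h.hx.tr.a3 htB m1)
      · rcases h.hq.tr.cases hs.symm with rfl | rfl | rfl
        · exact htB m11
        · exact htb rfl
        · exact htc rfl
    refine ⟨htB, fun s hs hsB => ?_⟩
    obtain rfl := key s hsB hs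
    exact one_B1 hG hB.mx htB dyu key hs hsB

theorem moveS0 (hG : Cub G) (hB : Opt G B) (h : DC G B v x u w y z p q yu p2 a b s q')
    (hne : G.Adj q' x) (hpx : G.Adj p x) : False := by
  have m1 := h.hv.mem; have m2 := h.hu.mem; have m3 := h.ha.1; have m4 := h.hv.h3
  have m5 := h.hx.mem; have m6 := h.hp.mem; have m7 := h.hq.mem; have m8 := h.hyu.mem
  have m9 := h.hx.h1; have m10 := h.hx.h2; have m11 := h.hq.h1
  have dx := h.hx.d; have dp := h.hp.d; have dq := h.hq.d; have dyu := h.hyu.d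
  have dy := h.hy; have dz := h.hz; have dq' := h.hq'
  have n1 := h.px hG; have n2 := h.ua; have n3 := h.va; have n4 := h.wa
  have n5 := h.hv.tr.2.2.1; have n6 := h.hv.tr.a2.ne; have n7 := h.hv.tr.a3.ne
  have n8 := h.ta.1
  have hp2 : x = p2 := by
    rcases h.hp.tr.cases hpx with e | e | e
    · rw [e] at dx; omega
    · exact e
    · exact absurd (e ▸ m5) m2
  have hval : Valid G (insert v (insert u (insert a ((B.erase p).erase q)))) := by
    apply valid_move hB.valid
    · intro t ht ht'
      have : t = v ∨ t = u ∨ t = a := by simpa [ht'] using ht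
      rcases this with rfl | rfl | rfl
      · refine ⟨⟨u, by simp, h.hv.tr.a2⟩, w, ?_, h.hv.tr.a3⟩
        simp only [mem_insert, mem_erase]; grind
      · refine ⟨⟨v, by simp, h.hu.tr.a3⟩, q, ?_, h.hu.tr.a2⟩
        simp only [mem_insert, mem_erase]; grind
      · refine ⟨⟨yu, ?_, h.ta.a1⟩, q, ?_, h.ta.a2⟩ <;>
        · simp only [mem_insert, mem_erase]; grind
    · intro r hr hr' t hrt ht ht'
      have : r = p ∨ r = q := by
        simp only [mem_insert, mem_erase] at hr'; tauto
      rcases this with rfl | rfl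
      · rcases h.hp.tr.cases hrt with rfl | rfl | rfl
        · exact ⟨a, by simp, h.hyu.tr.a2⟩
        · exact ⟨v, by simp, by rw [← hp2]; exact h.hx.tr.a3⟩
        · exact absurd ht m2
      · obtain rfl := ub dq.le hrt h.hq.tr.a1 ht m11
        refine ⟨x, ?_, hne⟩
        simp only [mem_insert, mem_erase]; grind
    · intro r hr hr' t hrt ht ht'
      simp only [mem_insert, mem_erase] at ht'
      have : r = v ∨ r = u ∨ r = a := by simpa [hr'] using hr
      rcases this with rfl | rfl | rfl
      · rcases h.hv.tr.cases hrt with rfl | rfl | rfl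
        · refine ⟨p, ?_, hpx.symm⟩
          simp only [mem_insert, mem_erase]; grind
        · exact absurd ht m2
        · exact absurd ht m4
      · rcases h.hu.tr.cases hrt with rfl | rfl | rfl
        · grind
        · grind
        · exact absurd ht m1
      · rcases h.ta.cases hrt with rfl | rfl | rfl
        · refine ⟨p, ?_, h.hyu.tr.a1⟩
          simp only [mem_insert, mem_erase]; grind
        · grind
        · obtain ⟨o, o1, o2, o3, o4, o5⟩ := h.s_other hG
          exact ⟨o, by simp [o1, o2, o3, o4], o5⟩
  have := hB.h1 _ hval
  rw [card_insert_of_notMem (by simp [m1, n6, n3]), card_insert_of_notMem (by simp [m2, n2]),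
      card_insert_of_notMem (by simp [m3])] at this
  have := card_er B p; have := card_er (B.erase p) q
  omega

theorem moveS2 (hG : Cub G) (hB : Opt G B) (h : DC G B v x u w y z p q yu p2 a b s q')
    (hne : G.Adj q' x) (hpx : ¬ G.Adj p x) (hp2 : d G B p2 = 2) {s' β : V}
    (hss : G.Adj s s') (ds' : d G B s' = 2) (hb : U1 G B b yu s' β) (hbw : b ≠ w) : False := by
  have m1 := h.hv.mem; have m2 := h.hu.mem; have m3 := h.ha.1; have m4 := h.hv.h3
  have m5 := h.hx.mem; have m6 := h.hp.mem; have m7 := h.hq.mem; have m8 := h.hyu.mem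
  have m9 := h.hx.h1; have m10 := h.hx.h2; have m11 := h.hq.h1
  have m12 := hb.mem; have m13 := hb.h2; have m14 := hb.h3
  have dx := h.hx.d; have dp := h.hp.d; have dq := h.hq.d; have dyu := h.hyu.d
  have dy := h.hy; have dz := h.hz; have dq' := h.hq'
  obtain ⟨ms, ds⟩ := h.ha.2 _ h.ta.a3
  have n1 := h.px hG; have n2 := h.ua; have n3 := h.va; have n4 := h.wa
  have n5 := h.hv.tr.2.2.1; have n6 := h.hv.tr.a2.ne; have n7 := h.hv.tr.a3.ne
  have n8 := h.ta.1; have n9 := h.ta.2.1; have n10 := h.ta.2.2.1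
  have n11 := hb.tr.a3.ne; have n12 := h.hyu.tr.2.2.1
  have bv : b ≠ v := by
    intro e
    rcases h.hv.tr.cases (e ▸ hb.tr.a1) with e | e | e
    · rw [e] at dyu; omega
    · exact m2 (e ▸ m8)
    · exact m4 (e ▸ m8)
  have bu : b ≠ u := by
    intro e
    rcases h.hu.tr.cases (e ▸ hb.tr.a1) with e | e | e
    · rw [e] at dyu; omega
    · exact n8 e
    · exact m1 (e ▸ m8)
  have βv : β ≠ v := by
    intro e
    rcases h.hv.tr.cases (e ▸ hb.tr.a3.symm) with e | e | e
    · exact m12 (e ▸ m5)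
    · exact bu e
    · exact hbw e
  have βu : β ≠ u := by
    intro e
    rcases h.hu.tr.cases (e ▸ hb.tr.a3.symm) with e | e | e
    · exact m12 (e ▸ m6)
    · exact m12 (e ▸ m7)
    · exact bv e
  have βa : β ≠ a := by
    rintro rfl; exact m12 (h.ha.2 _ hb.tr.a3.symm).1
  have hval : Valid G
      (insert v (insert u (insert a (insert b (((B.erase q').erase p).erase s))))) := by
    apply valid_move hB.valid
    · intro t ht ht'
      have : t = v ∨ t = u ∨ t = a ∨ t = b := by simpa [ht'] using ht
      rcases this with rfl | rfl | rfl | rfl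
      · refine ⟨⟨u, by simp, h.hv.tr.a2⟩, w, ?_, h.hv.tr.a3⟩
        simp only [mem_insert, mem_erase]; grind
      · refine ⟨⟨v, by simp, h.hu.tr.a3⟩, p, ?_, h.hu.tr.a1⟩
        simp only [mem_insert, mem_erase]; grind
      · refine ⟨⟨yu, ?_, h.ta.a1⟩, s, ?_, h.ta.a3⟩ <;>
        · simp only [mem_insert, mem_erase]; grind
      · refine ⟨⟨yu, ?_, hb.tr.a1⟩, β, ?_, hb.tr.a3⟩ <;>
        · simp only [mem_insert, mem_erase]; grind
    · intro r hr hr' t hrt ht ht'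
      by_cases hts : t = s'
      · subst hts; exact ⟨b, by simp, hb.tr.a2.symm⟩
      by_cases htx : t = x
      · subst htx; exact ⟨v, by simp, h.hx.tr.a3⟩
      by_cases htq : t = q
      · subst htq; exact ⟨u, by simp, h.hq.tr.a2⟩
      have : r = q' ∨ r = p ∨ r = s := by
        simp only [mem_insert, mem_erase] at hr'; tauto
      obtain ⟨zz, tq⟩ := hG.tr2 hne h.hq.tr.a1.symm (by rintro rfl; omega)
      have hzz : zz ∉ B := by
        intro hc
        have := tq.d_eq (B := B)
        rw [if_pos m5, if_pos m7, if_pos hc] at this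
        omega
      have nq : ¬ G.Adj q' t := by
        intro hc
        rcases tq.cases hc with e | e | e
        · exact htx e
        · exact htq e
        · exact hzz (e ▸ ht)
      rcases this with rfl | rfl | rfl
      · exact absurd hrt nq
      · rcases h.hp.tr.cases hrt with rfl | rfl | rfl
        · exact ⟨a, by simp, h.hyu.tr.a2⟩
        · obtain ⟨o, o1, o2, o3⟩ := hG.other_black hp2.ge r
          refine ⟨o, ?_, o3⟩
          have e1 : o ≠ q' := by
            rintro rfl; exact nq o3.symm
          have e2 : o ≠ s := by
            rintro rfl; exact hts (ub ds.le o3.symm hss ht m13)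
          simp [o1, o2, e1, e2]
        · exact absurd ht m2
      · exact absurd (ub ds.le hrt hss ht m13) hts
    · intro r hr hr' t hrt ht ht'
      simp only [mem_insert, mem_erase] at ht'
      have : r = v ∨ r = u ∨ r = a ∨ r = b := by simpa [hr'] using hr
      rcases this with rfl | rfl | rfl | rfl
      · rcases h.hv.tr.cases hrt with rfl | rfl | rfl
        · refine ⟨q', ?_, hne.symm⟩
          simp only [mem_insert, mem_erase]; grind
        · exact absurd ht m2
        · exact absurd ht m4
      · rcases h.hu.tr.cases hrt with rfl | rfl | rfl
        · grind
        · refine ⟨q', ?_, h.hq.tr.a1⟩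
          simp only [mem_insert, mem_erase]; grind
        · exact absurd ht m1
      · rcases h.ta.cases hrt with rfl | rfl | rfl
        · refine ⟨p, ?_, h.hyu.tr.a1⟩
          simp only [mem_insert, mem_erase]; grind
        · refine ⟨q', ?_, h.hq.tr.a1⟩
          simp only [mem_insert, mem_erase]; grind
        · grind
      · rcases hb.tr.cases hrt with rfl | rfl | rfl
        · refine ⟨p, ?_, h.hyu.tr.a1⟩
          simp only [mem_insert, mem_erase]; grind
        · refine ⟨s, ?_, hss.symm⟩
          simp only [mem_insert, mem_erase]; grind
        · exact absurd ht m14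
  have := hB.h1 _ hval
  rw [card_insert_of_notMem (by simp [m1, n6, n3, bv.symm]),
      card_insert_of_notMem (by simp [m2, n2, bu.symm]),
      card_insert_of_notMem (by simp [m3, n12]), card_insert_of_notMem (by simp [m12])] at this
  have := card_er B q'; have := card_er (B.erase q') p; have := card_er ((B.erase q').erase p) s
  omega

theorem moveS3 (hG : Cub G) (hB : Opt G B) (h : DC G B v x u w y z p q yu p2 a b s q')
    (hpx : ¬ G.Adj p x) (hp2 : d G B p2 = 2) {s' : V}
    (hss : G.Adj s s') (ds' : d G B s' = 2) (hw : U1 G B w yu s' v) : False := by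
  have m1 := h.hv.mem; have m2 := h.hu.mem; have m3 := h.ha.1; have m4 := h.hv.h3
  have m5 := h.hx.mem; have m6 := h.hp.mem; have m7 := h.hq.mem; have m8 := h.hyu.mem
  have m9 := h.hx.h1; have m10 := h.hx.h2; have m11 := h.hq.h1
  have m13 := hw.h2; have m15 := h.hp.h2
  have dx := h.hx.d; have dp := h.hp.d; have dq := h.hq.d; have dyu := h.hyu.d
  have dy := h.hy; have dz := h.hz; have dq' := h.hq'
  obtain ⟨ms, ds⟩ := h.ha.2 _ h.ta.a3
  have n1 := h.px hG; have n2 := h.ua; have n3 := h.va; have n4 := h.wa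
  have n5 := h.hv.tr.2.2.1; have n6 := h.hv.tr.a2.ne; have n7 := h.hv.tr.a3.ne
  have n8 := h.ta.1; have n9 := h.ta.2.1; have n10 := h.ta.2.2.1
  have n11 := h.hx.tr.a1.ne; have n12 := h.hx.tr.a2.ne
  have n13 : s' ≠ x := by
    rintro rfl; have := h.qx ms hss.symm; omega
  have n14 : p2 ≠ x := by
    rintro rfl; exact hpx h.hp.tr.a2
  have hbw : w = b := by
    rcases h.hyu.tr.cases hw.tr.a1.symm with e | e | e
    · exact absurd (e ▸ m6) m4
    · exact absurd e n4
    · exact e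
  have hval : Valid G (insert v (insert a (insert w (((B.erase x).erase yu).erase s)))) := by
    apply valid_move hB.valid
    · intro t ht ht'
      have : t = v ∨ t = a ∨ t = w := by simpa [ht'] using ht
      rcases this with rfl | rfl | rfl
      · refine ⟨⟨w, by simp, h.hv.tr.a3⟩, u, ?_, h.hv.tr.a2⟩
        simp only [mem_insert, mem_erase]; grind
      · refine ⟨⟨q, ?_, h.ta.a2⟩, yu, ?_, h.ta.a1⟩ <;>
        · simp only [mem_insert, mem_erase]; grind
      · refine ⟨⟨v, by simp, hw.tr.a3⟩, yu, ?_, hw.tr.a1⟩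
        simp only [mem_insert, mem_erase]; grind
    · intro r hr hr' t hrt ht ht'
      by_cases hts : t = s'
      · subst hts; exact ⟨w, by simp, hw.tr.a2.symm⟩
      have : r = x ∨ r = yu ∨ r = s := by
        simp only [mem_insert, mem_erase] at hr'; tauto
      rcases this with rfl | rfl | rfl
      · obtain ⟨o, o1, o2, o3⟩ := hG.other_black (h.qx ht hrt).ge r
        refine ⟨o, ?_, o3⟩
        have e1 : o ≠ yu := by
          rintro rfl
          rw [ub dyu.le o3.symm h.hyu.tr.a1 ht m6] at hrt
          exact hpx hrt.symm
        have e2 : o ≠ s := by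
          rintro rfl; exact hts (ub ds.le o3.symm hss ht m13)
        simp [o1, o2, e1, e2]
      · obtain rfl := ub dyu.le hrt h.hyu.tr.a1 ht m6
        refine ⟨p2, ?_, h.hp.tr.a2⟩
        simp only [mem_insert, mem_erase]; grind
      · exact absurd (ub ds.le hrt hss ht m13) hts
    · intro r hr hr' t hrt ht ht'
      simp only [mem_insert, mem_erase] at ht'
      have : r = v ∨ r = a ∨ r = w := by simpa [hr'] using hr
      rcases this with rfl | rfl | rfl
      · rcases h.hv.tr.cases hrt with rfl | rfl | rfl
        · grind
        · exact absurd ht m2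
        · exact absurd ht m4
      · rcases h.ta.cases hrt with rfl | rfl | rfl
        · grind
        · refine ⟨u, ?_, h.hq.tr.a2⟩
          simp only [mem_insert, mem_erase]; grind
        · grind
      · rcases hw.tr.cases hrt with rfl | rfl | rfl
        · grind
        · refine ⟨s, ?_, hss.symm⟩
          simp only [mem_insert, mem_erase]; grind
        · exact absurd ht m1
  refine hB.drop hval ?_ ?_ ?_
  · rw [card_insert_of_notMem (by simp [m1, n7, n3]), card_insert_of_notMem (by simp [m3, n4.symm]),
      card_insert_of_notMem (by simp [m4])]
    have := card_er B x; have := card_er (B.erase x) yu; have := card_er ((B.erase x).erase yu) s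
    omega
  · obtain ⟨s3, s4, ts⟩ := hG.tr1 hss
    have e1 := E_erase_le (G := G) (B := B) x (k := 1) (wn_le1 h.hx.tr
      (by simp only [mem_erase]; grind) (by simp only [mem_erase]; grind))
    have e2 := E_erase_le (G := G) (B := B.erase x) yu (k := 2) (wn_le2 h.hyu.tr
      (by simp only [mem_erase]; grind))
    have e3 := E_erase_le (G := G) (B := (B.erase x).erase yu) s (k := 2) (wn_le2 ts
      (by simp only [mem_erase]; grind))
    have e4 := E_insert_le (G := G) (B := ((B.erase x).erase yu).erase s) (t := w) (k := 2)
      (by simp [m4]) (wn_ge2 hw.tr.swap (by simp) (by simp [m1]))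
    have e5 := E_insert_le (G := G) (B := insert w (((B.erase x).erase yu).erase s)) (t := a)
      (k := 2) (by simp [m3, n4.symm]) (wn_ge2 h.ta.swap
      (by simp only [mem_insert, mem_erase]; grind) (by simp only [mem_insert, mem_erase]; grind))
    have e6 := E_insert_le (G := G) (B := insert a (insert w (((B.erase x).erase yu).erase s)))
      (t := v) (k := 2) (by simp [m1, n7, n3]) (wn_ge2 h.hv.tr
      (by simp only [mem_insert, mem_erase]; grind) (by simp only [mem_insert, mem_erase]; grind))
    omega
  · intro t ht
    rw [mem_W3] at ht ⊢
    have hta : t ≠ v := by rintro rfl; simp at ht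
    have htb : t ≠ w := by rintro rfl; simp at ht
    have htc : t ≠ a := by rintro rfl; simp at ht
    have htx : t ≠ x := by rintro rfl; exact ht.2 v h.hx.tr.a3 (by simp)
    have hts : t ≠ s := by rintro rfl; exact ht.2 a h.ta.a3.symm (by simp)
    have hty : t ≠ yu := by rintro rfl; exact ht.2 a h.hyu.tr.a2 (by simp)
    have htB : t ∉ B := by intro h; exact ht.1 (by simp [hty, htx, hts, h])
    have key : ∀ r ∈ B, G.Adj t r → r = s := by
      intro r hsB hs
      have := ht.2 r hs
      by_contra hc
      have hsx : r = x ∨ r = yu := by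
        simp only [mem_insert, mem_erase] at this; tauto
      rcases hsx with rfl | rfl
      · exact hta (hG.uw dx.ge hs.symm h.hx.tr.a3 htB m1)
      · rcases h.hyu.tr.cases hs.symm with rfl | rfl | rfl
        · exact htB m6
        · exact htc rfl
        · exact htb hbw.symm
    refine ⟨htB, fun r hs hsB => ?_⟩
    obtain rfl := key r hsB hs
    exact one_B1 hG hB.mx htB ds key hs hsB

end RD

namespace RD
open Finset Classical
set_option linter.unusedSectionVars false
variable {V : Type*} [Fintype V] {G : SimpleGraph V} {B : Finset V}
variable {v x u w y z p q yu p2 a b s q' : V}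

theorem mem_deep {t : V} : t ∈ deep G B ↔ t ∉ B ∧ d G B t = 1 ∧
    ¬ ∃ x y, x ∈ B ∧ y ∈ B ∧ G.Adj t x ∧ G.Adj x y ∧ d G B y = 1 := by
  simp [deep]

theorem U2.d {v x u w : V} (h : U2 G B v x u w) : RD.d G B v = 1 := by
  rw [h.tr.d_eq, if_pos h.h1, if_neg h.h2, if_neg h.h3]
theorem U1.d {v x u w : V} (h : U1 G B v x u w) : RD.d G B v = 2 := by
  rw [h.tr.d_eq, if_pos h.h1, if_pos h.h2, if_neg h.h3]

theorem DC.deep (h : DC G B v x u w y z p q yu p2 a b s q') : v ∈ deep G B := by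
  rw [mem_deep]
  refine ⟨h.hv.mem, h.hv.d, ?_⟩
  rintro ⟨x1, y1, hx1, hy1, h1, h2, h3⟩
  rcases h.hv.tr.cases h1 with rfl | rfl | rfl
  · have := h.qx hy1 h2; omega
  · exact h.hv.h2 hx1
  · exact h.hv.h3 hx1

theorem moveK (hG : Cub G) (hB : Opt G B) (h : DC G B v x u w y z p q yu p2 a b s q') :
    ∃ s' β, G.Adj s s' ∧ d G B s' = 2 ∧ U1 G B b yu s' β := by
  by_contra hcon
  have m1 := h.hv.mem; have m2 := h.hu.mem; have m3 := h.ha.1; have m4 := h.hv.h3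
  have m5 := h.hx.mem; have m6 := h.hp.mem; have m7 := h.hq.mem; have m8 := h.hyu.mem
  have m9 := h.hx.h1; have m10 := h.hx.h2; have m11 := h.hq.h1; have m12 := h.hp.h2
  have m13 := h.hyu.h3
  have dx := h.hx.d; have dp := h.hp.d; have dq := h.hq.d; have dyu := h.hyu.d
  have dy := h.hy; have dz := h.hz; have dq' := h.hq'
  obtain ⟨ms, ds⟩ := h.ha.2 _ h.ta.a3
  have n1 := h.px hG; have n2 := h.ua; have n3 := h.va; have n4 := h.wa
  have n5 := h.hv.tr.2.2.1; have n6 := h.hv.tr.a2.ne; have n7 := h.hv.tr.a3.ne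
  have n8 := h.ta.1; have n9 := h.ta.2.1; have n10 := h.ta.2.2.1
  have hval : Valid G (insert u (insert a ((B.erase q).erase yu))) := by
    apply valid_move hB.valid
    · intro t ht ht'
      have : t = u ∨ t = a := by simpa [ht'] using ht
      rcases this with rfl | rfl
      · refine ⟨⟨p, ?_, h.hu.tr.a1⟩, q, ?_, h.hu.tr.a2⟩ <;>
        · simp only [mem_insert, mem_erase]; grind
      · refine ⟨⟨s, ?_, h.ta.a3⟩, q, ?_, h.ta.a2⟩ <;>
        · simp only [mem_insert, mem_erase]; grind
    · intro r hr hr' t hrt ht ht'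
      by_cases htp : t = p
      · subst htp; exact ⟨u, by simp, h.hp.tr.a3⟩
      have : r = yu ∨ r = q := by
        simp only [mem_insert, mem_erase] at hr'; tauto
      have nyu : ∀ o, G.Adj t o → o ≠ yu := by
        rintro o ho rfl
        exact htp (ub dyu.le ho.symm h.hyu.tr.a1 ht m6)
      rcases this with rfl | rfl
      · exact absurd rfl (nyu r hrt.symm)
      · obtain rfl := ub dq.le hrt h.hq.tr.a1 ht m11
        obtain ⟨o, o1, o2, o3⟩ := hG.other_black dq'.ge r
        exact ⟨o, by simp [o1, o2, nyu o o3], o3⟩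
    · intro r hr hr' t hrt ht ht'
      simp only [mem_insert, mem_erase] at ht'
      have : r = u ∨ r = a := by simpa [hr'] using hr
      rcases this with rfl | rfl
      · rcases h.hu.tr.cases hrt with rfl | rfl | rfl
        · refine ⟨yu, ?_, h.hp.tr.a1⟩
          simp only [mem_insert, mem_erase]; grind
        · grind
        · exact absurd ht m1
      · rcases h.ta.cases hrt with rfl | rfl | rfl
        · grind
        · grind
        · obtain ⟨o, o1, o2, o3, o4, o5⟩ := h.s_other hG
          exact ⟨o, by simp [o1, o3, o4], o5⟩
  have hcard : B.card ≤ (insert u (insert a ((B.erase q).erase yu))).card := by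
    rw [card_insert_of_notMem (by simp [m2, n2]),
      card_insert_of_notMem (by simp [m3])]
    have := card_er B q; have := card_er (B.erase q) yu
    omega
  have hE : E G (insert u (insert a ((B.erase q).erase yu))) ≤ E G B := by
    have e1 := E_erase_le (G := G) (B := B) q (k := 2) (wn_le2 h.hq.tr
      (by simp only [mem_erase]; grind))
    have e2 := E_erase_le (G := G) (B := B.erase q) yu (k := 2) (wn_le2 h.hyu.tr
      (by simp only [mem_erase]; grind))
    have e4 := E_insert_le (G := G) (B := (B.erase q).erase yu) (t := a) (k := 2)
      (by simp [m3]) (wn_ge2 h.ta (by simp) (by simp))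
    have e5 := E_insert_le (G := G) (B := insert a ((B.erase q).erase yu)) (t := u)
      (k := 2) (by simp [m2, n2]) (wn_ge2 h.hu.tr.rot
      (by simp only [mem_insert, mem_erase]; grind) (by simp only [mem_insert, mem_erase]; grind))
    omega
  have hm : ∀ t, t ∈ insert u (insert a ((B.erase q).erase yu)) ↔
      t = u ∨ t = a ∨ (t ≠ yu ∧ t ≠ q ∧ t ∈ B) := by
    intro t; simp only [mem_insert, mem_erase]
  generalize insert u (insert a ((B.erase q).erase yu)) = B' at *
  have uB : u ∈ B' := by simp [hm]
  have aB : a ∈ B' := by simp [hm]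
  have hW : W3 G B' ⊆ W3 G B := by
    intro t ht
    rw [mem_W3] at ht ⊢
    have htb : t ≠ u := by rintro rfl; exact ht.1 uB
    have htc : t ≠ a := by rintro rfl; exact ht.1 aB
    have htq : t ≠ q := by rintro rfl; exact ht.2 u h.hq.tr.a2 uB
    have hty : t ≠ yu := by rintro rfl; exact ht.2 a h.hyu.tr.a2 aB
    have htB : t ∉ B := by intro h; exact ht.1 (by simp [hm, hty, htq, h])
    have key : ∀ s ∈ B, G.Adj t s → s = yu := by
      intro s hsB hs
      have := ht.2 s hs
      by_contra hc
      obtain rfl : s = q := by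
        rw [hm] at this; tauto
      rcases h.hq.tr.cases hs.symm with rfl | rfl | rfl
      · exact htB m11
      · exact htb rfl
      · exact htc rfl
    refine ⟨htB, fun s hs hsB => ?_⟩
    obtain rfl := key s hsB hs
    exact one_B1 hG hB.mx htB dyu key hs hsB
  have hcard' : B'.card = B.card := le_antisymm (hB.h1 _ hval) hcard
  have hmx : Mx G B' := ⟨hval, fun C hC => by rw [hcard']; exact hB.h1 _ hC⟩
  have hdeep := hB.h3 B' hval hcard' (by
    have := hB.h2 B' hval hcard'
    have := card_le_card hW
    omega)
  refine absurd hdeep (not_le.2 (card_lt_card ?_))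
  have hvd : v ∉ deep G B' := by
    intro hc
    have := (mem_deep.1 hc).2.1
    have : x = u := ub this.le h.hv.tr.a1 h.hv.tr.a2
      ((hm x).2 (Or.inr (Or.inr ⟨by grind, by grind, m5⟩))) uB
    exact m2 (this ▸ m5)
  rw [ssubset_iff_of_subset]
  · exact ⟨v, h.deep, hvd⟩
  intro τ hτ
  have hτv : τ ≠ v := by rintro rfl; exact hvd hτ
  rw [mem_deep] at hτ
  obtain ⟨t1, t2, t3⟩ := hτ
  have htb : τ ≠ u := by rintro rfl; exact t1 uB
  have htc : τ ≠ a := by rintro rfl; exact t1 aB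
  have htq : τ ≠ q := by
    rintro rfl; exact n2 (ub t2.le h.hq.tr.a2 h.hq.tr.a3 uB aB)
  have hpB : p ∈ B' := (hm p).2 (Or.inr (Or.inr ⟨by grind, by grind, m6⟩))
  have hty : τ ≠ yu := by
    rintro rfl
    have := ub t2.le h.hyu.tr.a1 h.hyu.tr.a2 hpB aB
    exact m3 (this ▸ m6)
  have tB : τ ∉ B := fun hc => t1 ((hm τ).2 (Or.inr (Or.inr ⟨hty, htq, hc⟩)))
  have ntq : ¬ G.Adj τ q := by
    intro hc
    rcases h.hq.tr.cases hc.symm with e | e | e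
    · exact tB (e ▸ m11)
    · exact htb e
    · exact htc e
  have ntu : ¬ G.Adj τ u := by
    intro hc
    rcases h.hu.tr.cases hc.symm with e | e | e
    · exact tB (e ▸ m6)
    · exact htq e
    · exact hτv e
  have nta : ¬ G.Adj τ a := fun hc => tB (h.ha.2 _ hc.symm).1
  obtain ⟨o, o1, o2, o3⟩ := hG.other_white t2.le yu
  have oB : o ∉ B := by
    intro hc
    refine o2 ((hm o).2 (Or.inr (Or.inr ⟨o1, ?_, hc⟩)))
    rintro rfl; exact ntq o3
  obtain ⟨X0, hX0⟩ := card_pos.1 (show 0 < d G B' τ by omega)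
  rw [mem_filter] at hX0
  obtain ⟨X, hX1, hX2, hX3⟩ := F1 hG hmx t1 o3 o2 hX0.2.1 hX0.2.2
  have XB : X ∈ B ∧ X ≠ yu ∧ X ≠ q := by
    rcases (hm X).1 hX1 with e | e | e
    · exact absurd (e ▸ hX2) ntu
    · exact absurd (e ▸ hX2) nta
    · exact ⟨e.2.2, e.1, e.2.1⟩
  have dX : d G B X = 2 := by
    obtain ⟨x2, x3, x4, x5⟩ := F1 hG hB.mx tB o3 oB hX2 XB.1
    have : x2 ∈ B' := (hm x2).2 (Or.inr (Or.inr ⟨by rintro rfl; omega, by rintro rfl; omega, x3⟩))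
    rw [ub t2.le hX2 x4 hX1 this]; exact x5
  obtain ⟨X1, X2, kX⟩ := hG.k2 XB.1 dX tB hX2.symm
  have hXi : X1 ∈ B' ∧ X2 ∈ B' := by
    have := kX.tr.d_eq (B := B')
    rw [hX3, if_neg t1] at this
    grind
  have key : ∀ Y, Y ∈ B → Y ∈ B' → G.Adj X Y → d G B Y = 1 → Y = s := by
    intro Y hY hY' hXY hd
    have hd' : d G B' Y = 2 := by
      rcases hval.d12 hG hY' with e | e
      · exact absurd ⟨X, Y, hX1, hY', hX2, hXY, e⟩ t3
      · exact e
    obtain ⟨r, r1, r2, r3⟩ := hG.other_black hd'.ge X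
    have hYq : Y ≠ q ∧ Y ≠ yu := by
      rcases (hm Y).1 hY' with e | e | e
      · exact absurd (e ▸ hY) m2
      · exact absurd (e ▸ hY) m3
      · exact ⟨e.2.1, e.1⟩
    rcases (hm r).1 r2 with rfl | rfl | e
    · rcases h.hu.tr.cases r3.symm with e | e | e
      · rw [e] at hd; omega
      · exact absurd e hYq.1
      · exact absurd (e ▸ hY) m1
    · rcases h.ta.cases r3.symm with e | e | e
      · exact absurd e hYq.2
      · exact absurd e hYq.1
      · exact e
    · exact absurd (ub hd.le r3 hXY.symm e.2.2 XB.1) r1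
  by_cases hyt : G.Adj τ yu
  · exfalso
    obtain rfl : τ = b := by
      rcases h.hyu.tr.cases hyt.symm with e | e | e
      · exact absurd (e ▸ m6) tB
      · exact absurd e htc
      · exact e
    obtain ⟨o', tt⟩ := hG.tr2 hX2 hyt XB.2.1
    have hoo : o = o' := by
      rcases tt.cases o3 with e | e | e
      · exact absurd (e ▸ XB.1) oB
      · exact absurd e o1
      · exact e
    subst hoo
    have hU : U1 G B τ X yu o := ⟨tB, tt, XB.1, m8, oB⟩
    have hs : G.Adj X s := by
      rcases hB.valid.d12 hG kX.h1 with e1 | e1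
      · rw [← key X1 kX.h1 hXi.1 kX.tr.a1 e1]; exact kX.tr.a1
      rcases hB.valid.d12 hG kX.h2 with e2 | e2
      · rw [← key X2 kX.h2 hXi.2 kX.tr.a2 e2]; exact kX.tr.a2
      exact (F6 hG hB hU kX dyu e1 e2).elim
    exact hcon ⟨X, o, hs.symm, dX, tB, tt.rot.swap, m8, XB.1, oB⟩
  · obtain ⟨o', tt⟩ := hG.tr2 hX2 o3 (by rintro rfl; exact oB XB.1)
    have oB' : o' ∉ B := by
      intro hc
      have : o' ∈ B' := (hm o').2 (Or.inr (Or.inr ⟨by rintro rfl; exact hyt tt.a3,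
        by rintro rfl; exact ntq tt.a3, hc⟩))
      exact tt.2.1 (ub t2.le tt.a1 tt.a3 hX1 this)
    have hU : U2 G B τ X o o' := ⟨tB, tt, XB.1, oB, oB'⟩
    rw [mem_deep]
    refine ⟨tB, hU.d, ?_⟩
    rintro ⟨x2, Y, hx2, hY, h1, h2, h3⟩
    obtain rfl := ub hU.d.le hX2 h1 XB.1 hx2
    have hYs : Y = s := by
      rcases kX.tr.cases h2 with rfl | rfl | rfl
      · exact key _ hY hXi.1 h2 h3
      · exact key _ hY hXi.2 h2 h3
      · exact absurd hY tB
    subst hYs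
    obtain ⟨zz, k'⟩ := hG.k2' XB.1 dX tB hX2.symm hY h2
    exact GoodV0 hG hB hU k' h3 h.ha h.ta.a3

/-- D-claim -/
theorem Dclaim (hG : Cub G) (hB : Opt G B) (h : DC G B v x u w y z p q yu p2 a b s q')
    (hpref : d G B p2 = 1 → ∃ a', Bad G B a' ∧ G.Adj a' p2) : False := by
  by_cases hN : G.Adj q' x
  swap
  · exact moveN hG hB h hN
  by_cases hpx : G.Adj p x
  · exact moveS0 hG hB h hN hpx
  obtain ⟨s', β, h1, h2, h3⟩ := moveK hG hB h
  have hbu : b ≠ u := by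
    intro e
    rcases h.hu.tr.cases (e ▸ h3.tr.a1) with e | e | e
    · have := h.hp.d; have := h.hyu.d; rw [e] at this; omega
    · exact h.ta.1 e
    · exact h.hv.mem (e ▸ h.hyu.mem)
  have hp2 : d G B p2 = 2 := by
    rcases hB.valid.d12 hG h.hp.h2 with e | e
    swap
    · exact e
    exfalso
    obtain ⟨a', b1, b2⟩ := hpref e
    obtain ⟨g1, g2⟩ := GoodWeak hG hB h.hu h.hp.swap h.hq.d e b1 b2
    obtain rfl : a' = a := by
      rcases h.hq.tr.cases g1 with e | e | e
      · exact absurd (e ▸ h.hq.h1) b1.1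
      · exact absurd ((b1.2 v) (e ▸ h.hu.tr.a3)).1 h.hv.mem
      · exact e
    have hs : p2 = s := by
      rcases h.ta.cases b2 with e | e | e
      · exact absurd e.symm h.hp.tr.1
      · exact absurd e.symm g2
      · exact e
    subst hs
    obtain rfl := ub e.le h1 h.hp.tr.a2.symm h3.h2 h.hp.mem
    exact hbu (hG.uw h2.ge h3.tr.a2.symm h.hp.tr.a3 h3.mem h.hu.mem)
  by_cases hbw : b = w
  · subst hbw
    have : β = v := by
      rcases h3.tr.cases h.hv.tr.a3.symm with e | e | e
      · exact absurd (e ▸ h3.h1) h.hv.mem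
      · exact absurd (e ▸ h3.h2) h.hv.mem
      · exact e.symm
    subst this
    exact moveS3 hG hB h hpx hp2 h1 h2 h3
  · exact moveS2 hG hB h hN hpx hp2 h1 h2 h3 hbw

end RD

namespace RD
open Finset Classical
set_option linter.unusedSectionVars false
variable {V : Type*} [Fintype V] {G : SimpleGraph V} {B : Finset V}

/-- number of neighbours of `v` in `S` -/
noncomputable def nb (G : SimpleGraph V) (S : Finset V) (v : V) : ℕ := (S.filter (G.Adj v)).card

theorem bip (G : SimpleGraph V) (S T : Finset V) : ∑ s ∈ S, nb G T s = ∑ t ∈ T, nb G S t := by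
  have := sum_card_bipartiteAbove_eq_sum_card_bipartiteBelow (s := S) (t := T) (r := G.Adj)
  unfold bipartiteAbove bipartiteBelow at this
  unfold nb
  simp only [G.adj_comm] at this ⊢
  rw [this]

theorem d_nb (v : V) : d G B v = nb G B v := by
  unfold d nb; congr 1; ext t; simp [and_comm]
theorem wn_nb (v : V) : wn G B v = nb G Bᶜ v := by
  unfold wn nb; congr 1; ext t; simp [and_comm]

theorem nb_le_one {S : Finset V} {v : V}
    (h : ∀ s ∈ S, ∀ t ∈ S, G.Adj v s → G.Adj v t → s = t) : nb G S v ≤ 1 := by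
  unfold nb; rw [card_le_one]
  intro a ha b hb
  rw [mem_filter] at ha hb
  exact h a ha.1 b hb.1 ha.2 hb.2

theorem nb_pos {S : Finset V} {v s : V} (h : s ∈ S) (h' : G.Adj v s) : 1 ≤ nb G S v :=
  card_pos.2 ⟨s, by simp [h, h']⟩

theorem nb_mono {S T : Finset V} (h : S ⊆ T) (v : V) : nb G S v ≤ nb G T v :=
  card_le_card (filter_subset_filter _ h)

theorem nb_univ (hG : Cub G) (v : V) : nb G univ v = 3 := by
  have := hG.d_wn (B := univ) v
  rw [d_nb, wn_nb] at this
  simpa [nb] using this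

theorem nb_disj (hG : Cub G) {S T : Finset V} (h : Disjoint S T) (v : V) :
    nb G S v + nb G T v ≤ 3 := by
  rw [← nb_univ hG v]
  unfold nb
  rw [← card_union_of_disjoint (disjoint_filter_filter h)]
  apply card_le_card
  intro t; simp only [mem_union, mem_filter, mem_univ, true_and]; tauto

theorem nb_union_le (S T : Finset V) (v : V) : nb G (S ∪ T) v ≤ nb G S v + nb G T v := by
  unfold nb; rw [filter_union]; exact card_union_le _ _

/-- black vertices with two black neighbours -/
noncomputable def B2 (G : SimpleGraph V) (B : Finset V) : Finset V := B.filter fun t => d G B t = 2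

theorem mem_B2 {t : V} : t ∈ B2 G B ↔ t ∈ B ∧ d G B t = 2 := by simp [B2]

noncomputable def cc (G : SimpleGraph V) (B : Finset V) (t : V) : ℕ := nb G (B2 G B) t

noncomputable def Weak (G : SimpleGraph V) (B : Finset V) : Finset V :=
  univ.filter fun t => t ∉ B ∧ d G B t = 2 ∧ cc G B t = 1
noncomputable def Strong (G : SimpleGraph V) (B : Finset V) : Finset V :=
  univ.filter fun t => t ∉ B ∧ d G B t = 2 ∧ cc G B t = 2
noncomputable def w2 (G : SimpleGraph V) (B : Finset V) : Finset V :=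
  univ.filter fun t => t ∉ B ∧ d G B t = 1
noncomputable def V0 (G : SimpleGraph V) (B : Finset V) : Finset V := w2 G B \ deep G B
noncomputable def Dd (G : SimpleGraph V) (B : Finset V) : Finset V :=
  (deep G B).filter fun v => ∀ u, u ∉ B → G.Adj v u → u ∈ Weak G B
noncomputable def good0 (G : SimpleGraph V) (B : Finset V) : Finset V :=
  univ.filter fun t => t ∉ B ∧ d G B t = 3 ∧ 1 ≤ cc G B t
noncomputable def bads (G : SimpleGraph V) (B : Finset V) : Finset V :=
  univ.filter fun t => Bad G B t

theorem mem_Weak {t : V} : t ∈ Weak G B ↔ t ∉ B ∧ d G B t = 2 ∧ cc G B t = 1 := by simp [Weak]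
theorem mem_Strong {t : V} : t ∈ Strong G B ↔ t ∉ B ∧ d G B t = 2 ∧ cc G B t = 2 := by
  simp [Strong]
theorem mem_w2 {t : V} : t ∈ w2 G B ↔ t ∉ B ∧ d G B t = 1 := by simp [w2]

theorem cc_le (t : V) : cc G B t ≤ d G B t := by
  rw [d_nb]; exact nb_mono (filter_subset _ _) t

theorem cc_pos (hG : Cub G) (hB : Opt G B) {t : V} (ht : t ∉ B) (h1 : 1 ≤ d G B t)
    (h2 : d G B t ≤ 2) : 1 ≤ cc G B t := by
  have := hG.d_wn (B := B) t
  obtain ⟨p, hp⟩ := card_pos.1 (show 0 < d G B t by omega)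
  obtain ⟨o, ho⟩ := card_pos.1 (show 0 < wn G B t by omega)
  rw [mem_filter] at hp ho
  obtain ⟨x, x1, x2, x3⟩ := F1 hG hB.mx ht ho.2.1 ho.2.2 hp.2.1 hp.2.2
  exact nb_pos (mem_B2.2 ⟨x1, x3⟩) x2

theorem weak_U1 (hG : Cub G) (hB : Opt G B) {j : V} (hj : j ∈ Weak G B) :
    ∃ p q α, U1 G B j p q α ∧ d G B p = 2 ∧ d G B q = 1 := by
  rw [mem_Weak] at hj
  obtain ⟨h1, h2, h3⟩ := hj
  obtain ⟨p, hp⟩ := card_pos.1 (show 0 < cc G B j by omega)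
  rw [mem_filter, mem_B2] at hp
  obtain ⟨q, q1, q2, q3⟩ := hG.other_black h2.ge p
  obtain ⟨α, t⟩ := hG.tr2 hp.2 q3 q1.symm
  have hα : α ∉ B := by
    intro hc
    have := t.d_eq (B := B)
    rw [if_pos hp.1.1, if_pos q2, if_pos hc] at this; omega
  refine ⟨p, q, α, ⟨h1, t, hp.1.1, q2, hα⟩, hp.1.2, ?_⟩
  rcases hB.valid.d12 hG q2 with e | e
  · exact e
  · exfalso
    unfold cc nb at h3
    have := card_le_one.1 h3.le p (by simp [mem_B2, hp]) q (by simp [mem_B2, q2, e, q3])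
    exact q1 this.symm

theorem w2_U2 (hG : Cub G) (hB : Opt G B) {j : V} (hj : j ∉ B) (hd : d G B j = 1) {u : V}
    (hu : u ∉ B) (hju : G.Adj j u) :
    ∃ x w, U2 G B j x u w ∧ d G B x = 2 := by
  obtain ⟨p, hp⟩ := card_pos.1 (show 0 < d G B j by omega)
  rw [mem_filter] at hp
  obtain ⟨x, x1, x2, x3⟩ := F1 hG hB.mx hj hju hu hp.2.1 hp.2.2
  obtain ⟨w, t⟩ := hG.tr2 x2 hju (by rintro rfl; exact hu x1)
  have hw : w ∉ B := by
    intro hc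
    exact t.2.1 (ub hd.le x2 t.a3 x1 hc)
  exact ⟨x, w, ⟨hj, t, x1, hu, hw⟩, x3⟩

def IsEnd (G : SimpleGraph V) (B : Finset V) (j y : V) : Prop :=
  ∃ x ∈ B, d G B x = 2 ∧ G.Adj j x ∧ G.Adj x y ∧ y ∈ B ∧ d G B y = 1

theorem IsEnd.inj (hG : Cub G) {j j' y : V} (h : IsEnd G B j y) (h' : IsEnd G B j' y)
    (hj : j ∉ B) (hj' : j' ∉ B) : j = j' := by
  obtain ⟨x, a1, a2, a3, a4, a5, a6⟩ := h
  obtain ⟨x', b1, b2, b3, b4, b5, b6⟩ := h'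
  obtain rfl := ub a6.le a4.symm b4.symm a1 b1
  exact hG.uw a2.ge a3.symm b3.symm hj hj'

theorem weak_end (hG : Cub G) (hB : Opt G B) {j : V} (hj : j ∈ Weak G B) :
    ∃ y, IsEnd G B j y := by
  obtain ⟨p, q, α, hU, hp, hq⟩ := weak_U1 hG hB hj
  obtain ⟨y, z, k⟩ := hG.k2 hU.h1 hp hU.mem hU.tr.a1.symm
  rcases hB.valid.d12 hG k.h1 with e1 | e1
  · exact ⟨y, p, hU.h1, hp, hU.tr.a1, k.tr.a1, k.h1, e1⟩
  rcases hB.valid.d12 hG k.h2 with e2 | e2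
  · exact ⟨z, p, hU.h1, hp, hU.tr.a1, k.tr.a2, k.h2, e2⟩
  exact (F6 hG hB hU k hq e1 e2).elim

theorem V0_end (hG : Cub G) (hB : Opt G B) {j : V} (hj : j ∈ V0 G B) :
    ∃ y, IsEnd G B j y := by
  rw [V0, mem_sdiff, mem_w2, mem_deep] at hj
  obtain ⟨⟨h1, h2⟩, h3⟩ := hj
  have : ∃ x y, x ∈ B ∧ y ∈ B ∧ G.Adj j x ∧ G.Adj x y ∧ d G B y = 1 := by
    by_contra hc; exact h3 ⟨h1, h2, hc⟩
  obtain ⟨x, y, a1, a2, a3, a4, a5⟩ := this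
  obtain ⟨o, -, o2, o3⟩ := hG.other_white h2.le j
  obtain ⟨x', w, hU, hd⟩ := w2_U2 hG hB h1 h2 o2 o3
  obtain rfl := ub h2.le hU.tr.a1 a3 hU.h1 a1
  exact ⟨y, x', a1, hd, a3, a4, a2, a5⟩

theorem V0_nobad (hG : Cub G) (hB : Opt G B) {j y a : V} (hj : j ∈ V0 G B) (hy : IsEnd G B j y)
    (ha : Bad G B a) : ¬ G.Adj y a := by
  intro hya
  rw [V0, mem_sdiff, mem_w2] at hj
  obtain ⟨⟨h1, h2⟩, -⟩ := hj
  obtain ⟨o, -, o2, o3⟩ := hG.other_white h2.le j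
  obtain ⟨x', w, hU, hd⟩ := w2_U2 hG hB h1 h2 o2 o3
  obtain ⟨x, a1, a2, a3, a4, a5, a6⟩ := hy
  obtain rfl := ub h2.le hU.tr.a1 a3 hU.h1 a1
  obtain ⟨z, k⟩ := hG.k2' a1 a2 h1 a3.symm a5 a4
  exact GoodV0 hG hB hU k a6 ha hya.symm

theorem Bad.not_weak {a j α : V} (ha : Bad G B a) (h : G.Adj j α) (hα : α ∉ B) : j ≠ a := by
  rintro rfl; exact hα (ha.2 _ h).1

/-- unique B2 neighbour of a weak vertex -/
theorem weak_p (hG : Cub G) {j p q α x : V} (hU : U1 G B j p q α) (hq : d G B q = 1)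
    (hx : x ∈ B) (hd : d G B x = 2) (h : G.Adj j x) : x = p := by
  rcases hU.tr.cases h with e | e | e
  · exact e
  · rw [e] at hd; omega
  · exact absurd (e ▸ hx) hU.h3

theorem weak_onebad (hG : Cub G) (hB : Opt G B) {j y a a' : V} (hj : j ∈ Weak G B)
    (hy : IsEnd G B j y) (ha : Bad G B a) (ha' : Bad G B a') (h : G.Adj y a) (h' : G.Adj y a') :
    a = a' := by
  obtain ⟨p, q, α, hU, hp, hq⟩ := weak_U1 hG hB hj
  obtain ⟨x, a1, a2, a3, a4, a5, a6⟩ := hy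
  obtain rfl := weak_p hG hU hq a1 a2 a3
  obtain ⟨z, k⟩ := hG.k2' a1 a2 hU.mem a3.symm a5 a4
  have g1 := (GoodWeak hG hB hU k hq a6 ha h.symm).1
  have g2 := (GoodWeak hG hB hU k hq a6 ha' h'.symm).1
  by_contra hne
  obtain ⟨q', k1, k2⟩ := (hB.valid q hU.h2).1
  obtain ⟨o, kq⟩ := hG.k1 hU.h2 hq hU.mem hU.tr.a2.symm k1 k2
  have e1 := ha.not_weak hU.tr.a3 hU.h3
  have e2 := ha'.not_weak hU.tr.a3 hU.h3
  have c1 : a = o := by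
    rcases kq.tr.cases g1 with e | e | e
    · exact absurd (e ▸ k1) ha.1
    · exact absurd e.symm e1
    · exact e
  have c2 : a' = o := by
    rcases kq.tr.cases g2 with e | e | e
    · exact absurd (e ▸ k1) ha'.1
    · exact absurd e.symm e2
    · exact e
  exact hne (c1.trans c2.symm)

/-- a weak neighbour `j` of a type-D vertex with a bad end: its `B1` neighbour is not an end -/
theorem D_end (hG : Cub G) (hB : Opt G B) {v j j' y q : V} {a : V} (hv : v ∈ Dd G B)
    (hj : j ∈ Weak G B) (hvj : G.Adj v j) (hy : IsEnd G B j y) (ha : Bad G B a) (hya : G.Adj y a)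
    (hpref : ∀ y', IsEnd G B j y' → ∃ a', Bad G B a' ∧ G.Adj y' a')
    (hjq : G.Adj j q) (hj' : IsEnd G B j' q) : False := by
  obtain ⟨p, q0, α, hU, hp, hq⟩ := weak_U1 hG hB hj
  obtain ⟨x, a1, a2, a3, a4, a5, a6⟩ := hy
  obtain rfl := weak_p hG hU hq a1 a2 a3
  obtain ⟨p2, k⟩ := hG.k2' a1 a2 hU.mem a3.symm a5 a4
  obtain ⟨q', b1, b2, b3, b4, b5, b6⟩ := hj'
  obtain rfl : q = q0 := by
    rcases hU.tr.cases hjq with e | e | e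
    · rw [e] at b6; omega
    · exact e
    · exact absurd (e ▸ b5) hU.h3
  obtain ⟨g1, g2⟩ := GoodWeak hG hB hU k hq a6 ha hya.symm
  rw [Dd, mem_filter, mem_deep] at hv
  obtain ⟨⟨v1, v2, v3⟩, v4⟩ := hv
  obtain ⟨xv, w, hV, hxv⟩ := w2_U2 hG hB v1 v2 hU.mem hvj
  obtain rfl : v = α := by
    rcases hU.tr.cases hvj.symm with e | e | e
    · exact absurd (e ▸ a1) v1
    · exact absurd (e ▸ b5) v1
    · exact e
  obtain ⟨yv, zv, kx⟩ := hG.k2 hV.h1 hxv v1 hV.tr.a1.symm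
  have key : ∀ t ∈ B, G.Adj xv t → d G B t = 2 := by
    intro t ht hxt
    rcases hB.valid.d12 hG ht with e | e
    · exact absurd ⟨xv, t, hV.h1, ht, hV.tr.a1, hxt, e⟩ v3
    · exact e
  obtain ⟨o, ky⟩ := hG.k1 a5 a6 ha.1 hya a1 a4.symm
  obtain ⟨s, ta⟩ := hG.tr2 hya.symm g1.symm g2.symm
  obtain ⟨a0, kq⟩ := hG.k1 b5 b6 hU.mem hjq.symm b1 b4.symm
  obtain rfl : a = a0 := by
    rcases kq.tr.cases g1 with e | e | e
    · exact absurd (e ▸ b1) ha.1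
    · exact absurd e.symm (ha.not_weak hU.tr.a3 hU.h3)
    · exact e
  refine Dclaim hG hB (v := v) (x := xv) (u := j) (w := w) (y := yv) (z := zv) (p := x) (q := q)
    (yu := y) (p2 := p2) (a := a) (b := o) (s := s) (q' := q')
    ⟨hV, kx, key _ kx.h1 kx.tr.a1, key _ kx.h2 kx.tr.a2, hU, k, ky, ha, ta, kq, b2⟩ ?_
  intro hp2
  obtain ⟨a', c1, c2⟩ := hpref p2 ⟨x, a1, a2, a3, k.tr.a2, k.h2, hp2⟩
  exact ⟨a', c1, c2.symm⟩

theorem exists_endfn (hG : Cub G) (hB : Opt G B) : ∃ e : V → V, ∀ j ∈ V0 G B ∪ Weak G B,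
    IsEnd G B j (e j) ∧ ((∃ a, Bad G B a ∧ G.Adj (e j) a) →
      ∀ y', IsEnd G B j y' → ∃ a', Bad G B a' ∧ G.Adj y' a') := by
  have : ∀ j, ∃ y, j ∈ V0 G B ∪ Weak G B → 
    IsEnd G B j y ∧ ((∃ a, Bad G B a ∧ G.Adj y a) →
      ∀ y', IsEnd G B j y' → ∃ a', Bad G B a' ∧ G.Adj y' a') := by
    intro j
    by_cases hj : j ∈ V0 G B ∪ Weak G B
    swap
    · exact ⟨j, fun h => absurd h hj⟩
    by_cases h : ∃ y, IsEnd G B j y ∧ ¬ ∃ a, Bad G B a ∧ G.Adj y a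
    · obtain ⟨y, h1, h2⟩ := h
      exact ⟨y, fun _ => ⟨h1, fun h => absurd h h2⟩⟩
    · push Not at h
      obtain ⟨y, hy⟩ : ∃ y, IsEnd G B j y := by
        rw [mem_union] at hj
        rcases hj with hj | hj
        · exact V0_end hG hB hj
        · exact weak_end hG hB hj
      exact ⟨y, fun _ => ⟨hy, fun _ y' hy' => h y' hy'⟩⟩
  choose e he using this
  exact ⟨e, fun j hj => he j hj⟩

theorem B1_white (hG : Cub G) (hB : Opt G B) {t y : V} (ht : t ∉ B) (hy : y ∈ B)
    (hd : d G B y = 1) (h : G.Adj y t) : t ∈ (good0 G B ∪ bads G B) ∪ Weak G B := by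
  have h1 := d_pos h.symm hy
  have h2 := hG.d_wn (B := B) t
  have h3 := cc_le (G := G) (B := B) t
  have h4 : cc G B t + 1 ≤ d G B t := by
    have : cc G B t < d G B t := by
      rw [d_nb]
      apply card_lt_card
      have hsub : filter (G.Adj t) (B2 G B) ⊆ filter (G.Adj t) B :=
        filter_subset_filter _ (filter_subset _ _)
      rw [ssubset_iff_of_subset hsub]
      refine ⟨y, by simp [hy, h.symm], by simp [mem_B2, hd]⟩
    omega
  simp only [mem_union]
  by_cases hd3 : d G B t = 3
  · left
    by_cases hc : 1 ≤ cc G B t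
    · left; simp [good0, ht, hd3, hc]
    · right
      rw [bads, mem_filter]
      refine ⟨mem_univ _, ht, fun s hs => ?_⟩
      have hsB : s ∈ B := by
        by_contra hsB
        have := wn_pos hs hsB; omega
      refine ⟨hsB, ?_⟩
      rcases hB.valid.d12 hG hsB with e | e
      · exact e
      · exact absurd (nb_pos (mem_B2.2 ⟨hsB, e⟩) hs) hc
  · right
    have := cc_pos hG hB ht h1 (by omega)
    rw [mem_Weak]
    exact ⟨ht, by omega, by omega⟩

end RD

namespace RD
open Finset Classical
set_option linter.unusedSectionVars false
variable {V : Type*} [Fintype V] {G : SimpleGraph V} {B : Finset V}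

theorem sum_ind {S T : Finset V} (h : S ⊆ T) (f : V → ℕ) :
    ∑ t ∈ T, (if t ∈ S then f t else 0) = ∑ t ∈ S, f t := by
  rw [← sum_filter]
  congr 1
  ext t; simp only [mem_filter]; exact ⟨fun h => h.2, fun h' => ⟨h h', h'⟩⟩

theorem card_ind {S T : Finset V} (h : S ⊆ T) :
    ∑ t ∈ T, (if t ∈ S then 1 else 0) = S.card := by
  rw [sum_ind h]; simp

theorem d_W3 (hG : Cub G) {t : V} (ht : t ∉ B) : t ∈ W3 G B ↔ d G B t = 0 := by
  rw [mem_W3]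
  constructor
  · rintro ⟨-, h⟩
    unfold d
    rw [card_eq_zero, filter_eq_empty_iff]
    rintro s - ⟨h1, h2⟩
    exact h s h1 h2
  · intro h
    refine ⟨ht, fun s hs hsB => ?_⟩
    have := d_pos hs hsB
    omega

/-- neighbours of a vertex in `W3` are strong -/
theorem W3_strong (hG : Cub G) (hB : Opt G B) {v u : V} (hv : v ∈ W3 G B) (h : G.Adj v u) :
    u ∈ Strong G B := by
  have hv' := mem_W3.1 hv
  have hu := hv'.2 u h
  have h0 := hG.d_wn (B := B) u
  have h1 := wn_pos h.symm hv'.1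
  have hd0 : d G B u ≠ 0 := fun e => F2a hG hB.mx hv ((d_W3 hG hu).2 e) h
  have hd1 : d G B u ≠ 1 := by
    intro e
    obtain ⟨x, w, hU, -⟩ := w2_U2 hG hB hu e hv'.1 h.symm
    exact F2b hG hB.mx hv hU
  have hd2 : d G B u = 2 := by omega
  have c1 := cc_pos hG hB hu (by omega) hd2.le
  have c2 := cc_le (G := G) (B := B) u
  rw [mem_Strong]
  refine ⟨hu, hd2, ?_⟩
  by_contra hc
  have hw : u ∈ Weak G B := mem_Weak.2 ⟨hu, hd2, by omega⟩
  obtain ⟨p, q, α, hU, hp, hq⟩ := weak_U1 hG hB hw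
  obtain rfl := hG.uw hd2.ge hU.tr.a3 h.symm hU.h3 hv'.1
  obtain ⟨y, hy⟩ := weak_end hG hB hw
  obtain ⟨x, a1, a2, a3, a4, a5, a6⟩ := hy
  obtain rfl := weak_p hG hU hq a1 a2 a3
  obtain ⟨z, k⟩ := hG.k2' a1 a2 hU.mem a3.symm a5 a4
  exact L5 hG hB hU k hq a6 hv

/-- deep vertices outside `Dd` have a strong neighbour -/
theorem deep_strong (hG : Cub G) (hB : Opt G B) {v : V} (hv : v ∈ deep G B \ Dd G B) :
    ∃ u ∈ Strong G B, G.Adj v u := by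
  rw [mem_sdiff, Dd, mem_filter] at hv
  obtain ⟨hv, hv2⟩ := hv
  have : ∃ u, u ∉ B ∧ G.Adj v u ∧ u ∉ Weak G B := by
    by_contra hc
    push Not at hc
    exact hv2 ⟨hv, hc⟩
  obtain ⟨u, hu, hvu, hw⟩ := this
  rw [mem_deep] at hv
  obtain ⟨v1, v2, v3⟩ := hv
  obtain ⟨xv, w, hV, hxv⟩ := w2_U2 hG hB v1 v2 hu hvu
  have h0 := hG.d_wn (B := B) u
  have h1 := wn_pos hvu.symm v1
  have hd0 : d G B u ≠ 0 := fun e => F2b hG hB.mx ((d_W3 hG hu).2 e) hV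
  have hd1 : d G B u ≠ 1 := by
    intro e
    obtain ⟨x', w', hU, -⟩ := w2_U2 hG hB hu e v1 hvu.symm
    obtain ⟨yv, zv, kx⟩ := hG.k2 hV.h1 hxv v1 hV.tr.a1.symm
    have key : ∀ t ∈ B, G.Adj xv t → d G B t = 2 := by
      intro t ht hxt
      rcases hB.valid.d12 hG ht with e | e
      · exact absurd ⟨xv, t, hV.h1, ht, hV.tr.a1, hxt, e⟩ v3
      · exact e
    exact ii hG hB ⟨hV.mem, hV.tr.swap, hV.h1, hV.h3, hV.h2⟩ kx (key _ kx.h1 kx.tr.a1)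
      (key _ kx.h2 kx.tr.a2) hU
  have hd2 : d G B u = 2 := by omega
  have c1 := cc_pos hG hB hu (by omega) hd2.le
  have c2 := cc_le (G := G) (B := B) u
  refine ⟨u, mem_Strong.2 ⟨hu, hd2, ?_⟩, hvu⟩
  by_contra hc
  exact hw (mem_Weak.2 ⟨hu, hd2, by omega⟩)

theorem strong_count (hG : Cub G) (hB : Opt G B) :
    3 * (W3 G B).card + (deep G B \ Dd G B).card ≤ (Strong G B).card := by
  have hdisj : Disjoint (W3 G B) (deep G B \ Dd G B) := by
    rw [disjoint_left]
    intro t h1 h2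
    have h3 := (d_W3 hG (mem_W3.1 h1).1).1 h1
    have h4 := (mem_deep.1 (mem_sdiff.1 h2).1).2.1
    omega
  have e1 := bip G (W3 G B ∪ (deep G B \ Dd G B)) (Strong G B)
  rw [sum_union hdisj] at e1
  have e2 : 3 * (W3 G B).card = ∑ t ∈ W3 G B, nb G (Strong G B) t := by
    rw [mul_comm, ← smul_eq_mul, ← sum_const]
    refine sum_congr rfl fun t ht => ?_
    rw [← nb_univ hG t]
    unfold nb
    congr 1
    ext s
    simp only [mem_filter, mem_univ, true_and]
    exact ⟨fun h => ⟨W3_strong hG hB ht h, h⟩, fun h => h.2⟩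
  have e3 : (deep G B \ Dd G B).card ≤ ∑ t ∈ deep G B \ Dd G B, nb G (Strong G B) t := by
    rw [card_eq_sum_ones]
    refine sum_le_sum fun t ht => ?_
    obtain ⟨u, h1, h2⟩ := deep_strong hG hB ht
    exact nb_pos h1 h2
  have e4 : ∑ s ∈ Strong G B, nb G (W3 G B ∪ (deep G B \ Dd G B)) s ≤ (Strong G B).card := by
    rw [card_eq_sum_ones]
    refine sum_le_sum fun s hs => ?_
    have key : ∀ t ∈ W3 G B ∪ (deep G B \ Dd G B), t ∉ B := by
      intro t ht
      rw [mem_union, mem_sdiff] at ht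
      rcases ht with h | h
      · exact (mem_W3.1 h).1
      · exact (mem_deep.1 h.1).1
    exact nb_le_one fun a ha b hb h1 h2 =>
      hG.uw (mem_Strong.1 hs).2.1.ge h1 h2 (key a ha) (key b hb)
  omega

theorem D_count (hG : Cub G) (hB : Opt G B) :
    2 * (Dd G B).card ≤ ((Weak G B).filter fun j => ∃ v ∈ Dd G B, G.Adj v j).card := by
  set D' := (Weak G B).filter fun j => ∃ v ∈ Dd G B, G.Adj v j with hD
  have e1 := bip G (Dd G B) D'
  have e2 : ∑ v ∈ Dd G B, nb G D' v = (Dd G B).card * 2 := by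
    rw [← smul_eq_mul, ← sum_const]
    refine sum_congr rfl fun v hv => ?_
    have hv' := hv
    rw [Dd, mem_filter, mem_deep] at hv'
    obtain ⟨⟨v1, v2, v3⟩, v4⟩ := hv'
    have h0 := hG.d_wn (B := B) v
    have : nb G D' v = wn G B v := by
      rw [wn_nb]; unfold nb; congr 1
      ext s
      simp only [mem_filter, mem_compl, hD]
      constructor
      · rintro ⟨⟨h1, -⟩, h2⟩
        exact ⟨(mem_Weak.1 h1).1, h2⟩
      · rintro ⟨h1, h2⟩
        exact ⟨⟨v4 s h1 h2, v, hv, h2⟩, h2⟩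
    omega
  have e3 : ∑ j ∈ D', nb G (Dd G B) j ≤ D'.card := by
    rw [card_eq_sum_ones]
    refine sum_le_sum fun s hs => ?_
    have key : ∀ t ∈ Dd G B, t ∉ B := by
      intro t ht
      rw [Dd, mem_filter, mem_deep] at ht
      exact ht.1.1
    have hs' := (mem_filter.1 hs).1
    exact nb_le_one fun a ha b hb h1 h2 =>
      hG.uw (mem_Weak.1 hs').2.1.ge h1 h2 (key a ha) (key b hb)
  omega

theorem good_count (hG : Cub G) (hB : Opt G B) :
    (V0 G B).card + (Dd G B).card ≤ ∑ t ∈ good0 G B, cc G B t := by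
  obtain ⟨e, he⟩ := exists_endfn hG hB
  have hAw : ∀ j ∈ V0 G B ∪ Weak G B, j ∉ B := by
    intro j hj
    rw [mem_union, V0, mem_sdiff, mem_w2, mem_Weak] at hj
    tauto
  have hdisj : Disjoint (V0 G B) (Weak G B) := by
    rw [disjoint_left]
    intro t h1 h2
    rw [V0, mem_sdiff, mem_w2] at h1
    have := (mem_Weak.1 h2).2.1
    omega
  have hinj : Set.InjOn e (V0 G B ∪ Weak G B : Finset V) := by
    intro j hj j' hj' h
    rw [mem_coe] at hj hj'
    have h1 := (he j hj).1
    rw [h] at h1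
    exact h1.inj hG (he j' hj').1 (hAw j hj) (hAw j' hj')
  set A := V0 G B ∪ Weak G B with hA
  set Y := A.image e with hY
  have hYm : ∀ y ∈ Y, y ∈ B ∧ d G B y = 1 := by
    intro y hy
    obtain ⟨j, hj, rfl⟩ := mem_image.1 hy
    obtain ⟨x, a1, a2, a3, a4, a5, a6⟩ := (he j hj).1
    exact ⟨a5, a6⟩
  have hYc : Y.card = (V0 G B).card + (Weak G B).card := by
    rw [hY, card_image_of_injOn hinj, hA, card_union_of_disjoint hdisj]
  set P := (Weak G B).filter fun j => ∃ a, Bad G B a ∧ G.Adj (e j) a with hP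
  set Q := (Weak G B).filter fun a => ∃ y ∈ Y, G.Adj a y with hQ
  set D' := (Weak G B).filter fun j => ∃ v ∈ Dd G B, G.Adj v j with hD
  have s1 : Y.card * 2 ≤ ∑ y ∈ Y, (nb G (good0 G B) y + nb G (bads G B) y + nb G (Weak G B) y) := by
    rw [← smul_eq_mul, ← sum_const]
    refine sum_le_sum fun y hy => ?_
    obtain ⟨y1, y2⟩ := hYm y hy
    have h0 := hG.d_wn (B := B) y
    have h1 := nb_union_le (G := G) (good0 G B ∪ bads G B) (Weak G B) y
    have h2 := nb_union_le (G := G) (good0 G B) (bads G B) y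
    have h3 : wn G B y ≤ nb G ((good0 G B ∪ bads G B) ∪ Weak G B) y := by
      rw [wn_nb]; unfold nb
      apply card_le_card
      intro t ht
      rw [mem_filter, mem_compl] at ht
      rw [mem_filter]
      exact ⟨B1_white hG hB ht.1 y1 y2 ht.2, ht.2⟩
    omega
  rw [sum_add_distrib, sum_add_distrib] at s1
  have s2 : ∑ y ∈ Y, nb G (bads G B) y ≤ P.card := by
    rw [hY, sum_image hinj, ← card_ind (show P ⊆ A from
      (filter_subset _ _).trans subset_union_right)]
    refine sum_le_sum fun j hj => ?_
    by_cases hjP : j ∈ P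
    · rw [if_pos hjP]
      have hjW := (mem_filter.1 hjP).1
      refine nb_le_one fun a ha b hb h1 h2 => ?_
      rw [bads, mem_filter] at ha hb
      exact weak_onebad hG hB hjW (he j hj).1 ha.2 hb.2 h1 h2
    · rw [if_neg hjP]
      unfold nb
      rw [Nat.le_zero, card_eq_zero, filter_eq_empty_iff]
      intro a ha h
      rw [bads, mem_filter] at ha
      rw [hA, mem_union] at hj
      rcases hj with hj' | hj'
      · exact V0_nobad hG hB hj' (he j (mem_union_left _ hj')).1 ha.2 h
      · exact hjP (mem_filter.2 ⟨hj', a, ha.2, h⟩)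
  have s3 : ∑ y ∈ Y, nb G (Weak G B) y ≤ Q.card := by
    rw [bip, ← card_ind (show Q ⊆ Weak G B from filter_subset _ _)]
    refine sum_le_sum fun a ha => ?_
    by_cases haQ : a ∈ Q
    · rw [if_pos haQ]
      obtain ⟨p, q, α, hU, hp, hq⟩ := weak_U1 hG hB ha
      have key : ∀ y ∈ Y, G.Adj a y → y = q := by
        intro y hy h
        obtain ⟨y1, y2⟩ := hYm y hy
        rcases hU.tr.cases h with e | e | e
        · rw [e] at y2; omega
        · exact e
        · exact absurd (e ▸ y1) hU.h3
      exact nb_le_one fun s hs t ht h1 h2 => (key s hs h1).trans (key t ht h2).symm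
    · rw [if_neg haQ]
      unfold nb
      rw [Nat.le_zero, card_eq_zero, filter_eq_empty_iff]
      intro y hy h
      exact haQ (mem_filter.2 ⟨ha, y, hy, h⟩)
  have s4 : P.card + Q.card + D'.card ≤ (Weak G B).card * 2 := by
    rw [← card_ind (show P ⊆ Weak G B from filter_subset _ _),
      ← card_ind (show Q ⊆ Weak G B from filter_subset _ _),
      ← card_ind (show D' ⊆ Weak G B from filter_subset _ _), ← sum_add_distrib,
      ← sum_add_distrib, ← smul_eq_mul, ← sum_const]
    refine sum_le_sum fun j hj => ?_
    by_cases h1 : j ∈ P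
    · by_cases h2 : j ∈ Q
      · by_cases h3 : j ∈ D'
        · exfalso
          obtain ⟨-, a, ha, hya⟩ := mem_filter.1 h1
          obtain ⟨-, y, hy, hjy⟩ := mem_filter.1 h2
          obtain ⟨-, v, hv, hvj⟩ := mem_filter.1 h3
          obtain ⟨j', hj', rfl⟩ := mem_image.1 hy
          have hjA : j ∈ A := mem_union_right _ hj
          exact D_end hG hB hv hj hvj (he j hjA).1 ha hya ((he j hjA).2 ⟨a, ha, hya⟩) hjy
            (he j' hj').1
        · simp [h1, h2, h3]
      · by_cases h3 : j ∈ D' <;> simp [h1, h2, h3]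
    · by_cases h2 : j ∈ Q <;> by_cases h3 : j ∈ D' <;> simp [h1, h2, h3]
  have s5 := D_count hG hB
  rw [← hD] at s5
  have s6 : ∑ y ∈ Y, nb G (good0 G B) y ≤ 2 * ∑ t ∈ good0 G B, cc G B t := by
    rw [bip, mul_sum]
    refine sum_le_sum fun t ht => ?_
    rw [good0, mem_filter] at ht
    have hd : Disjoint Y (B2 G B) := by
      rw [disjoint_left]
      intro y h1 h2
      have := (hYm y h1).2
      have := (mem_B2.1 h2).2
      omega
    have := nb_disj hG hd t
    change nb G Y t + cc G B t ≤ 3 at this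
    omega
  omega

theorem main_count (hG : Cub G) (hB : Opt G B) : 3 * (Bᶜ).card ≤ 2 * B.card := by
  have g1 := strong_count hG hB
  have g2 := good_count hG hB
  have hDd : Dd G B ⊆ deep G B := filter_subset _ _
  have hdw : deep G B ⊆ w2 G B := by
    intro t ht
    rw [mem_deep] at ht
    exact mem_w2.2 ⟨ht.1, ht.2.1⟩
  have c1 := card_sdiff_add_card_eq_card hDd
  have c2 := card_sdiff_add_card_eq_card hdw
  have c3 : (w2 G B \ deep G B).card = (V0 G B).card := rfl
  have i1 : Weak G B ⊆ Bᶜ := fun t ht => mem_compl.2 (mem_Weak.1 ht).1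
  have i2 : Strong G B ⊆ Bᶜ := fun t ht => mem_compl.2 (mem_Strong.1 ht).1
  have i3 : w2 G B ⊆ Bᶜ := fun t ht => mem_compl.2 (mem_w2.1 ht).1
  have i4 : W3 G B ⊆ Bᶜ := fun t ht => mem_compl.2 (mem_W3.1 ht).1
  have i5 : good0 G B ⊆ Bᶜ := fun t ht => mem_compl.2 (by
    rw [good0, mem_filter] at ht; exact ht.2.1)
  have t1 : (∑ t ∈ good0 G B, cc G B t) + (Weak G B).card + 2 * (Strong G B).card + (w2 G B).card
      ≤ ∑ t ∈ Bᶜ, cc G B t := by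
    rw [← sum_ind i5, ← card_ind i1, ← card_ind i2, ← card_ind i3, mul_sum, ← sum_add_distrib,
      ← sum_add_distrib, ← sum_add_distrib]
    refine sum_le_sum fun t ht => ?_
    rw [mem_compl] at ht
    have h0 := hG.d_wn (B := B) t
    have h1 := cc_le (G := G) (B := B) t
    have h2 := cc_pos hG hB ht
    have e5 : t ∈ good0 G B ↔ d G B t = 3 ∧ 1 ≤ cc G B t := by simp [good0, ht]
    simp only [e5, mem_Weak, mem_Strong, mem_w2, ht, not_false_eq_true, true_and]
    split_ifs <;> omega
  have t2 : ∑ t ∈ Bᶜ, wn G B t ≤ (Weak G B).card + (Strong G B).card + 2 * (w2 G B).card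
      + 3 * (W3 G B).card := by
    rw [← card_ind i1, ← card_ind i2, ← card_ind i3, ← card_ind i4, mul_sum, mul_sum,
      ← sum_add_distrib, ← sum_add_distrib, ← sum_add_distrib]
    refine sum_le_sum fun t ht => ?_
    rw [mem_compl] at ht
    have h0 := hG.d_wn (B := B) t
    have h1 := cc_le (G := G) (B := B) t
    have h2 := cc_pos hG hB ht
    simp only [d_W3 hG ht, mem_Weak, mem_Strong, mem_w2, ht, not_false_eq_true, true_and]
    split_ifs <;> omega
  have t3 : ∑ t ∈ Bᶜ, cc G B t = (B2 G B).card := by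
    unfold cc
    rw [bip, card_eq_sum_ones]
    refine sum_congr rfl fun x hx => ?_
    have h0 := hG.d_wn (B := B) x
    have := (mem_B2.1 hx).2
    rw [wn_nb] at h0
    omega
  have t4 : ∑ t ∈ Bᶜ, d G B t = ∑ x ∈ B, wn G B x := by
    simp only [d_nb, wn_nb]
    exact bip G _ _
  have t5 : ∑ x ∈ B, wn G B x + (B2 G B).card = B.card * 2 := by
    rw [← card_ind (show B2 G B ⊆ B from filter_subset _ _), ← sum_add_distrib, ← smul_eq_mul,
      ← sum_const]
    refine sum_congr rfl fun x hx => ?_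
    have h0 := hG.d_wn (B := B) x
    have h1 := hB.valid.d12 hG hx
    simp only [mem_B2, hx, true_and]
    split_ifs <;> omega
  have t6 : ∑ t ∈ Bᶜ, d G B t + ∑ t ∈ Bᶜ, wn G B t = (Bᶜ).card * 3 := by
    rw [← sum_add_distrib, ← smul_eq_mul, ← sum_const]
    exact sum_congr rfl fun x _ => hG.d_wn x
  omega

end RD

/-- If every vertex of a finite simple graph `G` has degree exactly `3`, then
`5 · γ_r(G) ≤ 2 · |V(G)|`. -/
theorem five_mul_restrainedDominationNumber_le_of_cubic
    {V : Type*} [Fintype V] (G : SimpleGraph V)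
    (hcubic : ∀ v : V, (G.neighborSet v).ncard = 3) :
    5 * restrainedDominationNumber G ≤ 2 * Fintype.card V := by
  classical
  have hG : RD.Cub G := fun v => RD.exists_tr hcubic v
  obtain ⟨B, hB⟩ := RD.exists_opt G
  have h1 : 3 * (Finset.univ \ B).card ≤ 2 * B.card := by
    have := RD.main_count hG hB
    rw [Finset.compl_eq_univ_sdiff] at this
    convert this
  have h2 : (Finset.univ \ B).card + B.card = Fintype.card V :=
    Finset.card_sdiff_add_card_eq_card (Finset.subset_univ B)
  have h3 : restrainedDominationNumber G ≤ (Finset.univ \ B).card := by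
    apply Nat.sInf_le
    refine ⟨((Finset.univ \ B : Finset V) : Set V), ⟨?_, ?_⟩, Set.ncard_coe_finset _⟩
    · intro v hv
      have hv' : v ∈ B := by simpa using hv
      obtain ⟨s, h1, h2⟩ := (hB.valid v hv').2
      exact ⟨s, by simpa using h1, h2⟩
    · intro v hv
      have hv' : v ∈ B := by simpa using hv
      obtain ⟨s, h1, h2⟩ := (hB.valid v hv').1
      exact ⟨s, by simpa using h1, h2⟩
  omega
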